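/- (Radford projection theorem over a field.) Let H and A be Hopf algebras over a field k and let π : H → A and ι : A → H be Hopf algebra homomorphisms with π ∘ ι = id_A. Let K := { r ∈ H : r_{(1)} ⊗ π(r_{(2)}) = r ⊗ 1 } be the space of coinvariants. Then: (1) K is a unital subalgebra of H; (2) the adjoint action a·r := ι(a_{(1)}) r ι(S_H(a_{(2)})) maps A ⊗ K into K, the map δ(r) := π(r_{(1)}) ⊗ r_{(2)} maps K into A ⊗ K, and these make K a left Yetter–Drinfel'd module over A; (3) Δ_K(r) := r_{(1)} ι(π(S_H(r_{(2)}))) ⊗ r_{(3)} maps K into K ⊗ K and makes K, together with ε_K = ε_H|_K and S_K(r) := ι(π(r_{(1)})) S_H(r_{(2)}), a Hopf algebra in the category of left A-Yetter–Drinfel'd modules; and (4) the linear map K ⊗ A → H, r ⊗ a ↦ r ι(a), is an isomorphism of Hopf algebras from the Radford biproduct K ⋊ A to H. -/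

import Mathlib

open TensorProduct

noncomputable section

variable {k : Type*} [Field k]
variable {A : Type*} [Ring A] [HopfAlgebra k A]
variable {X Y Z : Type*} [AddCommGroup X] [Module k X] [AddCommGroup Y] [Module k Y]
  [AddCommGroup Z] [Module k Z]

/-- LHS of the left Yetter–Drinfel'd compatibility condition, as a linear map
`A ⊗ X → A ⊗ X` sending `h ⊗ x` to `h₍₁₎x₍₋₁₎ ⊗ h₍₂₎ · x₍₀₎`. -/
def ydL (act : A ⊗[k] X →ₗ[k] X) (coact : X →ₗ[k] A ⊗[k] X) :
    A ⊗[k] X →ₗ[k] A ⊗[k] X :=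
  TensorProduct.map (LinearMap.mul' k A) act
    ∘ₗ (TensorProduct.tensorTensorTensorComm k A A A X).toLinearMap
    ∘ₗ TensorProduct.map (Coalgebra.comul (R := k)) coact

/-- RHS of the left Yetter–Drinfel'd compatibility condition, sending `h ⊗ x` to
`(h₍₁₎·x)₍₋₁₎ h₍₂₎ ⊗ (h₍₁₎·x)₍₀₎`. -/
def ydR (act : A ⊗[k] X →ₗ[k] X) (coact : X →ₗ[k] A ⊗[k] X) :
    A ⊗[k] X →ₗ[k] A ⊗[k] X :=
  TensorProduct.map (LinearMap.mul' k A) LinearMap.id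
    ∘ₗ (TensorProduct.assoc k A A X).symm.toLinearMap
    ∘ₗ LinearMap.lTensor A (TensorProduct.comm k X A).toLinearMap
    ∘ₗ (TensorProduct.assoc k A X A).toLinearMap
    ∘ₗ LinearMap.rTensor A coact
    ∘ₗ LinearMap.rTensor A act
    ∘ₗ (TensorProduct.assoc k A X A).symm.toLinearMap
    ∘ₗ LinearMap.lTensor A (TensorProduct.comm k A X).toLinearMap
    ∘ₗ (TensorProduct.assoc k A A X).toLinearMap
    ∘ₗ LinearMap.rTensor X (Coalgebra.comul (R := k))

/-- A left Yetter–Drinfel'd module structure over the Hopf algebra `A` on the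
vector space `X`: a left action, a left coaction, and the compatibility. -/
structure IsYD (act : A ⊗[k] X →ₗ[k] X) (coact : X →ₗ[k] A ⊗[k] X) : Prop where
  act_one : ∀ x : X, act (1 ⊗ₜ[k] x) = x
  act_mul : ∀ (a a' : A) (x : X),
    act ((a * a') ⊗ₜ[k] x) = act (a ⊗ₜ[k] act (a' ⊗ₜ[k] x))
  coassoc : (TensorProduct.assoc k A A X).toLinearMap
      ∘ₗ LinearMap.rTensor X (Coalgebra.comul (R := k)) ∘ₗ coact
      = LinearMap.lTensor A coact ∘ₗ coact
  counit_coact : (TensorProduct.lid k X).toLinearMap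
      ∘ₗ LinearMap.rTensor X (Coalgebra.counit (R := k)) ∘ₗ coact = LinearMap.id
  yd : ydL act coact = ydR act coact

/-- The diagonal action `h · (x ⊗ y) = h₍₁₎·x ⊗ h₍₂₎·y` on a tensor product. -/
def tAct (actX : A ⊗[k] X →ₗ[k] X) (actY : A ⊗[k] Y →ₗ[k] Y) :
    A ⊗[k] (X ⊗[k] Y) →ₗ[k] X ⊗[k] Y :=
  TensorProduct.map actX actY
    ∘ₗ (TensorProduct.tensorTensorTensorComm k A A X Y).toLinearMap
    ∘ₗ LinearMap.rTensor (X ⊗[k] Y) (Coalgebra.comul (R := k))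

/-- The codiagonal coaction `x ⊗ y ↦ x₍₋₁₎y₍₋₁₎ ⊗ (x₍₀₎ ⊗ y₍₀₎)` on a tensor product. -/
def tCoact (coactX : X →ₗ[k] A ⊗[k] X) (coactY : Y →ₗ[k] A ⊗[k] Y) :
    X ⊗[k] Y →ₗ[k] A ⊗[k] (X ⊗[k] Y) :=
  LinearMap.rTensor (X ⊗[k] Y) (LinearMap.mul' k A)
    ∘ₗ (TensorProduct.tensorTensorTensorComm k A X A Y).toLinearMap
    ∘ₗ TensorProduct.map coactX coactY

/-- The Yetter–Drinfel'd braiding `c_{X,Y} : x ⊗ y ↦ x₍₋₁₎ · y ⊗ x₍₀₎`. -/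
def ydBraid (coactX : X →ₗ[k] A ⊗[k] X) (actY : A ⊗[k] Y →ₗ[k] Y) :
    X ⊗[k] Y →ₗ[k] Y ⊗[k] X :=
  LinearMap.rTensor X actY
    ∘ₗ (TensorProduct.assoc k A Y X).symm.toLinearMap
    ∘ₗ LinearMap.lTensor A (TensorProduct.comm k X Y).toLinearMap
    ∘ₗ (TensorProduct.assoc k A X Y).toLinearMap
    ∘ₗ LinearMap.rTensor Y coactX

/-- The map `θ_X : x ↦ S(x₍₋₁₎) · x₍₀₎`. -/
def ydTheta (act : A ⊗[k] X →ₗ[k] X) (coact : X →ₗ[k] A ⊗[k] X) : X →ₗ[k] X :=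
  act ∘ₗ LinearMap.rTensor X (HopfAlgebra.antipode (R := k)) ∘ₗ coact

section Radford

variable {H : Type*} [Ring H] [HopfAlgebra k H]
variable {K : Type*} [AddCommGroup K] [Module k K]

/-- The generalized smash product multiplication on `K ⊗ A`, built from a
multiplication `mulK` on `K` and an `A`-action `actK` on `K`:
`(h⊗a)(k⊗b) = h (a₍₁₎·k) ⊗ a₍₂₎b`. -/
def biMulG (mulK : K ⊗[k] K →ₗ[k] K) (actK : A ⊗[k] K →ₗ[k] K) :
    (K ⊗[k] A) ⊗[k] (K ⊗[k] A) →ₗ[k] K ⊗[k] A :=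
  TensorProduct.map
      (mulK ∘ₗ LinearMap.lTensor K actK ∘ₗ (TensorProduct.assoc k K A K).toLinearMap)
      (LinearMap.mul' k A)
    ∘ₗ (TensorProduct.tensorTensorTensorComm k (K ⊗[k] A) A K A).toLinearMap
    ∘ₗ LinearMap.rTensor (K ⊗[k] A) (TensorProduct.assoc k K A A).symm.toLinearMap
    ∘ₗ LinearMap.rTensor (K ⊗[k] A) (LinearMap.lTensor K (Coalgebra.comul (R := k)))

/-- The cosmash comultiplication on `K ⊗ A`:
`Δ(h⊗a) = (h₍₁₎ ⊗ (h₍₂₎)₍₋₁₎a₍₁₎) ⊗ ((h₍₂₎)₍₀₎ ⊗ a₍₂₎)`. -/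
def biComulG (comulK : K →ₗ[k] K ⊗[k] K) (coactK : K →ₗ[k] A ⊗[k] K) :
    K ⊗[k] A →ₗ[k] (K ⊗[k] A) ⊗[k] (K ⊗[k] A) :=
  LinearMap.rTensor (K ⊗[k] A)
      (LinearMap.lTensor K (LinearMap.mul' k A) ∘ₗ (TensorProduct.assoc k K A A).toLinearMap)
    ∘ₗ (TensorProduct.tensorTensorTensorComm k (K ⊗[k] A) K A A).toLinearMap
    ∘ₗ LinearMap.rTensor (A ⊗[k] A) (TensorProduct.assoc k K A K).symm.toLinearMap
    ∘ₗ LinearMap.rTensor (A ⊗[k] A) (LinearMap.lTensor K coactK)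
    ∘ₗ TensorProduct.map comulK (Coalgebra.comul (R := k))

/-- The counit `ε_K ⊗ ε_A` on `K ⊗ A`. -/
def biCounitG (counitK : K →ₗ[k] k) : K ⊗[k] A →ₗ[k] k :=
  LinearMap.mul' k k ∘ₗ TensorProduct.map counitK (Coalgebra.counit (R := k))

/-- The space of coinvariants `K = {r ∈ H | r₍₁₎ ⊗ π(r₍₂₎) = r ⊗ 1}` of a Hopf
algebra projection `π : H → A`. -/
def coinvariants (π : H →ₐc[k] A) : Submodule k H :=
  LinearMap.ker
    (LinearMap.lTensor H π.toLinearMap ∘ₗ (Coalgebra.comul (R := k))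
      - (TensorProduct.mk k H A).flip 1)

/-- The adjoint action `a · r := ι(a₍₁₎) r ι(S_A(a₍₂₎))` of `A` on `H`. -/
def adAct (ι : A →ₐc[k] H) : A ⊗[k] H →ₗ[k] H :=
  LinearMap.mul' k H
    ∘ₗ LinearMap.lTensor H (LinearMap.mul' k H)
    ∘ₗ LinearMap.lTensor H (TensorProduct.comm k H H).toLinearMap
    ∘ₗ (TensorProduct.assoc k H H H).toLinearMap
    ∘ₗ LinearMap.rTensor H
        (TensorProduct.map ι.toLinearMap
          (ι.toLinearMap ∘ₗ HopfAlgebra.antipode (R := k)))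
    ∘ₗ LinearMap.rTensor H (Coalgebra.comul (R := k))

/-- The coaction `δ(r) := π(r₍₁₎) ⊗ r₍₂₎` of `A` on `H`. -/
def adCoact (π : H →ₐc[k] A) : H →ₗ[k] A ⊗[k] H :=
  LinearMap.rTensor H π.toLinearMap ∘ₗ (Coalgebra.comul (R := k))

/-- The comultiplication `Δ_K(r) := r₍₁₎ ι(π(S_H(r₍₂₎))) ⊗ r₍₃₎` of the coinvariants. -/
def coinvComul (π : H →ₐc[k] A) (ι : A →ₐc[k] H) : H →ₗ[k] H ⊗[k] H :=
  LinearMap.rTensor H (LinearMap.mul' k H)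
    ∘ₗ LinearMap.rTensor H
        (LinearMap.lTensor H
          (ι.toLinearMap ∘ₗ π.toLinearMap ∘ₗ HopfAlgebra.antipode (R := k)))
    ∘ₗ LinearMap.rTensor H (Coalgebra.comul (R := k))
    ∘ₗ (Coalgebra.comul (R := k))

/-- The antipode `S_K(r) := ι(π(r₍₁₎)) S_H(r₍₂₎)` of the coinvariants. -/
def coinvAntipode (π : H →ₐc[k] A) (ι : A →ₐc[k] H) : H →ₗ[k] H :=
  LinearMap.mul' k H
    ∘ₗ TensorProduct.map (ι.toLinearMap ∘ₗ π.toLinearMap) (HopfAlgebra.antipode (R := k))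
    ∘ₗ (Coalgebra.comul (R := k))


set_option linter.unusedSectionVars false
set_option linter.unusedSimpArgs false

/-! ### A Sweedler calculus -/

section Sweedler

/-- Unbundled linearity, for use with `fun_prop`. -/
@[fun_prop]
structure Lin (k : Type*) [Field k] {M N : Type*} [AddCommMonoid M] [Module k M]
    [AddCommMonoid N] [Module k N] (f : M → N) : Prop where
  add : ∀ x y, f (x + y) = f x + f y
  smul : ∀ (c : k) x, f (c • x) = c • f x

variable {M N NN : Type*} [AddCommMonoid M] [Module k M] [AddCommMonoid N] [Module k N]
  [AddCommMonoid NN] [Module k NN]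

/-- The bundled version of `Lin`. -/
def Lin.toMap {f : M → N} (hf : Lin k f) : M →ₗ[k] N where
  toFun := f
  map_add' := hf.add
  map_smul' := hf.smul

@[simp] lemma Lin.toMap_apply {f : M → N} (hf : Lin k f) (x : M) : hf.toMap x = f x := rfl

/-- Bundled bilinear map. -/
def biMap {f : M → N → NN} (h1 : ∀ b, Lin k (fun a => f a b)) (h2 : ∀ a, Lin k (fun b => f a b)) :
    M →ₗ[k] N →ₗ[k] NN :=
  LinearMap.mk₂ k f (fun x y b => (h1 b).add x y) (fun c x b => (h1 b).smul c x)
    (fun a x y => (h2 a).add x y) (fun c a x => (h2 a).smul c x)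

@[simp] lemma biMap_apply {f : M → N → NN} (h1 : ∀ b, Lin k (fun a => f a b))
    (h2 : ∀ a, Lin k (fun b => f a b)) (x : M) (y : N) : biMap h1 h2 x y = f x y := rfl

@[fun_prop] lemma lin_id : Lin k (fun x : M => x) := ⟨fun _ _ => rfl, fun _ _ => rfl⟩

@[fun_prop] lemma lin_comp {f : N → NN} {g : M → N} (hf : Lin k f) (hg : Lin k g) :
    Lin k (fun x => f (g x)) :=
  ⟨fun x y => by simp [hg.add, hf.add], fun c x => by simp [hg.smul, hf.smul]⟩

@[fun_prop] lemma lin_linearMap (L : N →ₗ[k] NN) {g : M → N} (hg : Lin k g) :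
    Lin k (fun x => L (g x)) :=
  ⟨fun x y => by simp [hg.add], fun c x => by simp [hg.smul]⟩

@[fun_prop] lemma lin_linearEquiv (L : N ≃ₗ[k] NN) {g : M → N} (hg : Lin k g) :
    Lin k (fun x => L (g x)) :=
  ⟨fun x y => by simp [hg.add], fun c x => by simp [hg.smul]⟩

@[fun_prop] lemma lin_bialgHom {B C : Type*} [Ring B] [Bialgebra k B] [Ring C] [Bialgebra k C]
    (L : B →ₐc[k] C) {g : M → B} (hg : Lin k g) :
    Lin k (fun x => L (g x)) :=
  ⟨fun x y => by simp [hg.add], fun c x => by simp [hg.smul]⟩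

@[fun_prop] lemma lin_mul_left {B : Type*} [Ring B] [Algebra k B] {g : M → B} (hg : Lin k g)
    (c : B) : Lin k (fun x => g x * c) :=
  ⟨fun x y => by simp [hg.add, add_mul], fun c x => by simp [hg.smul]⟩

@[fun_prop] lemma lin_mul_right {B : Type*} [Ring B] [Algebra k B] {g : M → B} (hg : Lin k g)
    (c : B) : Lin k (fun x => c * g x) :=
  ⟨fun x y => by simp [hg.add, mul_add], fun c x => by simp [hg.smul]⟩

@[fun_prop] lemma lin_tmul_left {g : M → N} (hg : Lin k g)
    (c : NN) : Lin k (fun x => g x ⊗ₜ[k] c) :=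
  ⟨fun x y => by simp [hg.add, TensorProduct.add_tmul],
    fun c x => by simp [hg.smul, TensorProduct.smul_tmul']⟩

@[fun_prop] lemma lin_tmul_right {g : M → N} (hg : Lin k g)
    (c : NN) : Lin k (fun x => c ⊗ₜ[k] g x) :=
  ⟨fun x y => by simp [hg.add, TensorProduct.tmul_add],
    fun c x => by simp [hg.smul]⟩

@[fun_prop] lemma lin_smul_left {g : M → k} (hg : Lin k g)
    (c : N) : Lin k (fun x => g x • c) :=
  ⟨fun x y => by simp [hg.add, add_smul], fun c x => by simp [hg.smul, mul_smul]⟩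

@[fun_prop] lemma lin_smul_right {g : M → N} (hg : Lin k g)
    (c : k) : Lin k (fun x => c • g x) :=
  ⟨fun x y => by simp [hg.add], fun d x => by simp only [hg.smul]; rw [smul_comm]⟩

@[fun_prop] lemma lin_subtype (K : Submodule k N) {g : M → K} (hg : Lin k g) :
    Lin k (fun x => (g x : N)) :=
  ⟨fun x y => by simp [hg.add], fun d x => by simp [hg.smul]⟩

variable {C : Type*} [AddCommGroup C] [Module k C] [Coalgebra k C]

variable (k C) in
/-- A chosen basis. -/
def bs : Module.Basis (Module.Basis.ofVectorSpaceIndex k C) k C := Module.Basis.ofVectorSpace k C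

variable (k) in
/-- `sw k h f` is the Sweedler sum `f(h₍₁₎, h₍₂₎)`. -/
def sw (h : C) (f : C → C → M) : M :=
  ((bs k C).tensorProduct (bs k C)).constr k (fun ij => f (bs k C ij.1) (bs k C ij.2))
    (Coalgebra.comul (R := k) h)

lemma sw_eq (h : C) (f : C → C → M) (h1 : ∀ b, Lin k (fun a => f a b))
    (h2 : ∀ a, Lin k (fun b => f a b)) :
    sw k h f = TensorProduct.lift (biMap h1 h2) (Coalgebra.comul (R := k) h) := by
  unfold sw
  congr 1
  apply ((bs k C).tensorProduct (bs k C)).ext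
  intro ij
  rw [Module.Basis.constr_basis]
  rw [Module.Basis.tensorProduct_apply']; rfl

@[simp] lemma sw_map (L : M →ₗ[k] N) (h : C) (f : C → C → M) :
    L (sw k h f) = sw k h (fun a b => L (f a b)) := by
  unfold sw
  rw [← LinearMap.comp_apply]
  congr 1
  apply ((bs k C).tensorProduct (bs k C)).ext
  intro ij
  simp

@[simp] lemma sw_mapE (L : M ≃ₗ[k] N) (h : C) (f : C → C → M) :
    L (sw k h f) = sw k h (fun a b => L (f a b)) := sw_map L.toLinearMap h f

lemma Lin.sw {L : M → N} (hL : Lin k L) (h : C) (f : C → C → M) :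
    L (sw k h f) = sw k h (fun a b => L (f a b)) := sw_map hL.toMap h f

@[simp] lemma sw_mapB {B D : Type*} [Ring B] [Bialgebra k B] [Ring D] [Bialgebra k D]
    (L : B →ₐc[k] D) (h : C) (f : C → C → B) :
    L (sw k h f) = sw k h (fun a b => L (f a b)) :=
  Lin.sw (k := k) (L := L) (by fun_prop) h f

@[simp] lemma sw_coe (K : Submodule k N) (h : C) (f : C → C → K) :
    ((sw k h f : K) : N) = sw k h (fun a b => (f a b : N)) :=
  sw_map K.subtype h f

@[simp] lemma sw_mul_left {B : Type*} [Ring B] [Algebra k B] (h : C) (f : C → C → B) (c : B) :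
    sw k h f * c = sw k h (fun a b => f a b * c) :=
  Lin.sw (L := fun x => x * c) (by fun_prop) h f

@[simp] lemma sw_mul_right {B : Type*} [Ring B] [Algebra k B] (h : C) (f : C → C → B) (c : B) :
    c * sw k h f = sw k h (fun a b => c * f a b) :=
  Lin.sw (L := fun x => c * x) (by fun_prop) h f

@[simp] lemma sw_tmul_left (h : C) (f : C → C → M) (c : N) :
    sw k h f ⊗ₜ[k] c = sw k h (fun a b => f a b ⊗ₜ[k] c) :=
  Lin.sw (L := fun x => x ⊗ₜ[k] c) (by fun_prop) h f

@[simp] lemma sw_tmul_right (h : C) (f : C → C → M) (c : N) :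
    c ⊗ₜ[k] sw k h f = sw k h (fun a b => c ⊗ₜ[k] f a b) :=
  Lin.sw (L := fun x => c ⊗ₜ[k] x) (by fun_prop) h f

lemma sw_smul (h : C) (f : C → C → M) (c : k) :
    c • sw k h f = sw k h (fun a b => c • f a b) :=
  Lin.sw (L := fun x => c • x) (by fun_prop) h f

@[fun_prop] lemma lin_sw_arg {g : N → C} (hg : Lin k g) (f : C → C → M) :
    Lin k (fun x => sw k (g x) f) :=
  ⟨fun x y => by simp [hg.add, sw], fun c x => by simp [hg.smul, sw]⟩

lemma lin_sw_fun (h : C) (f : N → C → C → M) (hf : ∀ a b, Lin k (fun x => f x a b)) :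
    Lin k (fun x => sw k h (f x)) := by
  constructor
  · intro x y
    have : (fun ij : _ × _ => f (x + y) (bs k C ij.1) (bs k C ij.2)) =
      (fun ij => f x (bs k C ij.1) (bs k C ij.2)) + (fun ij => f y (bs k C ij.1) (bs k C ij.2)) := by
      ext ij; exact (hf _ _).add x y
    simp only [sw, this, map_add, LinearMap.add_apply]
  · intro c x
    have : (fun ij : _ × _ => f (c • x) (bs k C ij.1) (bs k C ij.2)) =
      c • (fun ij => f x (bs k C ij.1) (bs k C ij.2)) := by
      ext ij; exact (hf _ _).smul c x
    simp only [sw, this, map_smul, LinearMap.smul_apply]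

@[fun_prop] lemma lin_sw_fun' (h : C) (f : N → C → C → M) (hf : ∀ a b, Lin k (fun x => f x a b)) :
    Lin k (fun x => sw k h (fun a b => f x a b)) := lin_sw_fun h f hf

lemma comul_sw (h : C) : Coalgebra.comul (R := k) h = sw k h (fun a b => a ⊗ₜ[k] b) := by
  rw [sw_eq _ _ (by intro; fun_prop) (by intro; fun_prop)]
  have : TensorProduct.lift (biMap (k := k) (f := fun a b : C => a ⊗ₜ[k] b)
      (by intro; fun_prop) (by intro; fun_prop)) = LinearMap.id := by
    ext; simp
  rw [this]; rfl

lemma sw_comm {D : Type*} [AddCommGroup D] [Module k D] [Coalgebra k D] (h : C) (g : D)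
    (f : C → C → D → D → M) :
    sw k h (fun a b => sw k g (fun c d => f a b c d))
      = sw k g (fun c d => sw k h (fun a b => f a b c d)) := by
  rw [sw]
  have key : ∀ t : C ⊗[k] C, 
    ((bs k C).tensorProduct (bs k C)).constr k (fun ij => sw k g (fun c d => f (bs k C ij.1) (bs k C ij.2) c d)) t
    = sw k g (fun c d => ((bs k C).tensorProduct (bs k C)).constr k (fun ij => f (bs k C ij.1) (bs k C ij.2) c d) t) := by
    intro t
    have hl : Lin k (fun t => sw k g (fun c d => ((bs k C).tensorProduct (bs k C)).constr k (fun ij => f (bs k C ij.1) (bs k C ij.2) c d) t)) := by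
      fun_prop
    have : ((bs k C).tensorProduct (bs k C)).constr k (fun ij => sw k g (fun c d => f (bs k C ij.1) (bs k C ij.2) c d)) = hl.toMap := by
      apply ((bs k C).tensorProduct (bs k C)).ext
      intro ij
      rw [Module.Basis.constr_basis, Lin.toMap_apply]
      simp only [Module.Basis.constr_basis]
    rw [this]; rfl
  rw [key]; rfl

/-- Linear extension of a function from the basis. -/
def ext1 (f : C → M) : C →ₗ[k] M := (bs k C).constr k (fun i => f (bs k C i))

lemma sw_congr_basis (h : C) (f g : C → C → M)
    (H : ∀ i j, f (bs k C i) (bs k C j) = g (bs k C i) (bs k C j)) : sw k h f = sw k h g := by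
  unfold sw; congr 2; ext ij; exact H _ _

/-- Trilinear extension. -/
def ext3 (f : C → C → C → M) (x y z : C) : M :=
  (bs k C).constr k (fun i => (bs k C).constr k (fun j => (bs k C).constr k (fun l =>
    f (bs k C i) (bs k C j) (bs k C l)) z) y) x

lemma ext3_basis (f : C → C → C → M) (i j l) :
    ext3 (k := k) f (bs k C i) (bs k C j) (bs k C l) = f (bs k C i) (bs k C j) (bs k C l) := by
  simp [ext3]

lemma lin_constr_fun {ι : Type*} (b : Module.Basis ι k C) (x : C) (f : N → ι → M)
    (hf : ∀ i, Lin k (fun z => f z i)) : Lin k (fun z => b.constr k (f z) x) := by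
  constructor
  · intro z w
    have : f (z + w) = f z + f w := by ext i; exact (hf i).add z w
    simp only [this, map_add, LinearMap.add_apply]
  · intro c z
    have : f (c • z) = c • f z := by ext i; exact (hf i).smul c z
    simp only [this, map_smul, LinearMap.smul_apply]

lemma ext3_l1 (f : C → C → C → M) (y z) : Lin k (fun x => ext3 (k := k) f x y z) := by
  unfold ext3; fun_prop
lemma ext3_l2 (f : C → C → C → M) (x z) : Lin k (fun y => ext3 (k := k) f x y z) := by
  unfold ext3
  apply lin_constr_fun
  intro i; fun_prop
lemma ext3_l3 (f : C → C → C → M) (x y) : Lin k (fun z => ext3 (k := k) f x y z) := by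
  unfold ext3
  apply lin_constr_fun
  intro i
  apply lin_constr_fun
  intro i; fun_prop

lemma sw_coassoc (h : C) (f : C → C → C → M) :
    sw k h (fun a b => sw k a (fun c d => f c d b))
      = sw k h (fun a b => sw k b (fun c d => f a c d)) := by
  have e1 : sw k h (fun a b => sw k a (fun c d => f c d b)) =
      sw k h (fun a b => sw k a (fun c d => ext3 (k := k) f c d b)) := by
    apply sw_congr_basis; intro i j
    apply sw_congr_basis; intro l m
    rw [ext3_basis]
  have e2 : sw k h (fun a b => sw k b (fun c d => f a c d)) =
      sw k h (fun a b => sw k b (fun c d => ext3 (k := k) f a c d)) := by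
    apply sw_congr_basis; intro i j
    apply sw_congr_basis; intro l m
    rw [ext3_basis]
  rw [e1, e2]
  have l1 := ext3_l1 (k := k) f
  have l2 := ext3_l2 (k := k) f
  have l3 := ext3_l3 (k := k) f
  let T : C →ₗ[k] C ⊗[k] C →ₗ[k] M := 
    LinearMap.mk₂ k (fun a t => TensorProduct.lift (biMap (k := k) (f := fun c d => ext3 (k := k) f a c d)
      (fun b => l2 a b) (fun b => l3 a b)) t)
      (by intro x y t
          induction t with
          | zero => simp
          | tmul c d => simp [(l1 _ _).add]
          | add _ _ h1 h2 => simp only [map_add, h1, h2]; abel)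
      (by intro x y t
          induction t with
          | zero => simp
          | tmul c d => simp [(l1 _ _).smul]
          | add _ _ h1 h2 => simp only [map_add, h1, h2, smul_add])
      (by simp) (by simp)
  let T' : C ⊗[k] (C ⊗[k] C) →ₗ[k] M := TensorProduct.lift T
  have a1 : ∀ t : C ⊗[k] C, T' (TensorProduct.assoc k C C C (LinearMap.rTensor C (Coalgebra.comul (R := k)) t)) =
     TensorProduct.lift (biMap (k := k) (f := fun a b => sw k a (fun c d => ext3 (k := k) f c d b))
      (fun b => by fun_prop) (fun b => by fun_prop)) t := by
    intro t
    induction t with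
    | zero => simp
    | add _ _ h1 h2 => simp only [map_add, h1, h2]
    | tmul x y =>
      rw [LinearMap.rTensor_tmul]
      simp only [lift.tmul, biMap_apply, comul_sw, sw_tmul_left, sw_map, sw_mapE]
      rfl
  have a2 : ∀ t : C ⊗[k] C, T' (LinearMap.lTensor C (Coalgebra.comul (R := k)) t) =
     TensorProduct.lift (biMap (k := k) (f := fun a b => sw k b (fun c d => ext3 (k := k) f a c d))
      (fun b => by fun_prop) (fun b => by fun_prop)) t := by
    intro t
    induction t with
    | zero => simp
    | add _ _ h1 h2 => simp only [map_add, h1, h2]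
    | tmul x y =>
      rw [LinearMap.lTensor_tmul]
      simp only [lift.tmul, biMap_apply, comul_sw, sw_tmul_right, sw_map]
      rfl
  rw [sw_eq h (fun a b => sw k a (fun c d => ext3 (k := k) f c d b))
      (fun b => by fun_prop) (fun b => by fun_prop),
      sw_eq h (fun a b => sw k b (fun c d => ext3 (k := k) f a c d))
      (fun b => by fun_prop) (fun b => by fun_prop), ← a1, ← a2, Coalgebra.coassoc_apply]

/-- change of the coalgebra along a linear map compatible with comultiplication -/
lemma sw_of_comul {D : Type*} [AddCommGroup D] [Module k D] [Coalgebra k D] (x : D)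
    (f : D → D → M) (h1 : ∀ b, Lin k (fun a => f a b)) (h2 : ∀ a, Lin k (fun b => f a b)) 
    (t : D ⊗[k] D) (ht : Coalgebra.comul (R := k) x = t) :
    sw k x f = TensorProduct.lift (biMap h1 h2) t := by
  rw [sw_eq x f h1 h2, ht]

lemma sw_counit_left (h : C) (f : C → M) (hf : Lin k f) :
    sw k h (fun a b => Coalgebra.counit (R := k) a • f b) = f h := by
  have : f h = hf.toMap (TensorProduct.lid k C (LinearMap.rTensor C (Coalgebra.counit (R := k)) (Coalgebra.comul (R := k) h))) := by
    simp
  rw [this, comul_sw]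
  simp only [sw_map, sw_mapE, LinearMap.rTensor_tmul, TensorProduct.lid_tmul, map_smul, Lin.toMap_apply]

lemma sw_counit_right (h : C) (f : C → M) (hf : Lin k f) :
    sw k h (fun a b => Coalgebra.counit (R := k) b • f a) = f h := by
  have : f h = hf.toMap (TensorProduct.rid k C (LinearMap.lTensor C (Coalgebra.counit (R := k)) (Coalgebra.comul (R := k) h))) := by
    simp
  rw [this, comul_sw]
  simp only [sw_map, sw_mapE, LinearMap.lTensor_tmul, TensorProduct.rid_tmul, map_smul, Lin.toMap_apply]

section Bi
variable {B D : Type*} [Ring B] [HopfAlgebra k B] [Ring D] [HopfAlgebra k D]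

lemma sw_mul (x y : B) (f : B → B → M) (h1 : ∀ b, Lin k (fun a => f a b))
    (h2 : ∀ a, Lin k (fun b => f a b)) :
    sw k (x * y) f = sw k x (fun a b => sw k y (fun c d => f (a * c) (b * d))) := by
  rw [sw_eq _ f h1 h2, Bialgebra.comul_mul, comul_sw x, comul_sw y]
  simp only [sw_mul_left, sw_mul_right, Algebra.TensorProduct.tmul_mul_tmul, sw_map, lift.tmul,
    biMap_apply]
  try rw [sw_comm]

lemma sw_hom (φ : B →ₐc[k] D) (x : B) (f : D → D → M) (h1 : ∀ b, Lin k (fun a => f a b))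
    (h2 : ∀ a, Lin k (fun b => f a b)) :
    sw k (φ x) f = sw k x (fun a b => f (φ a) (φ b)) := by
  rw [sw_eq _ f h1 h2, ← CoalgHomClass.map_comp_comul_apply, comul_sw x]
  simp only [sw_map, TensorProduct.map_tmul, lift.tmul, biMap_apply]
  rfl

lemma sw_one (f : B → B → M) (h1 : ∀ b, Lin k (fun a => f a b))
    (h2 : ∀ a, Lin k (fun b => f a b)) :
    sw k (1 : B) f = f 1 1 := by
  rw [sw_eq _ f h1 h2, Bialgebra.comul_one, Algebra.TensorProduct.one_def]
  simp

lemma sw_mul_antipode (x : B) (f : B → M) (hf : Lin k f) :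
    sw k x (fun a b => f (a * HopfAlgebra.antipode k b)) = Coalgebra.counit (R := k) x • f 1 := by
  have := congrArg f (HopfAlgebra.mul_antipode_lTensor_comul_apply (R := k) x)
  rw [comul_sw, Algebra.algebraMap_eq_smul_one, hf.smul] at this
  rw [← this]
  simp only [sw_map, LinearMap.lTensor_tmul, LinearMap.mul'_apply, hf.sw]

lemma sw_antipode_mul (x : B) (f : B → M) (hf : Lin k f) :
    sw k x (fun a b => f (HopfAlgebra.antipode k a * b)) = Coalgebra.counit (R := k) x • f 1 := by
  have := congrArg f (HopfAlgebra.mul_antipode_rTensor_comul_apply (R := k) x)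
  rw [comul_sw, Algebra.algebraMap_eq_smul_one, hf.smul] at this
  rw [← this]
  simp only [sw_map, LinearMap.rTensor_tmul, LinearMap.mul'_apply, hf.sw]

/-- cancellation `x₁ S(x₂) ⊗ x₃ = 1 ⊗ x` -/
lemma sw_cancel_left (x : B) (f : B → B → M) (h1 : ∀ b, Lin k (fun a => f a b))
    (h2 : ∀ a, Lin k (fun b => f a b)) :
    sw k x (fun a b => sw k b (fun c d => f (a * HopfAlgebra.antipode k c) d)) = f 1 x := by
  rw [← sw_coassoc x (fun a c d => f (a * HopfAlgebra.antipode k c) d)]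
  simp only [fun a b => sw_mul_antipode (k := k) a (fun z => f z b) (h1 b)]
  exact sw_counit_left x (fun b => f 1 b) (h2 1)

lemma sw_cancel_left' (x : B) (f : B → B → M) (h1 : ∀ b, Lin k (fun a => f a b))
    (h2 : ∀ a, Lin k (fun b => f a b)) :
    sw k x (fun a b => sw k b (fun c d => f (HopfAlgebra.antipode k a * c) d)) = f 1 x := by
  rw [← sw_coassoc x (fun a c d => f (HopfAlgebra.antipode k a * c) d)]
  simp only [fun a b => sw_antipode_mul (k := k) a (fun z => f z b) (h1 b)]
  exact sw_counit_left x (fun b => f 1 b) (h2 1)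

lemma sw_cancel_right (x : B) (f : B → B → M) (h1 : ∀ b, Lin k (fun a => f a b))
    (h2 : ∀ a, Lin k (fun b => f a b)) :
    sw k x (fun a b => sw k b (fun c d => f a (c * HopfAlgebra.antipode k d))) = f x 1 := by
  simp only [fun a b => sw_mul_antipode (k := k) b (fun z => f a z) (h2 a)]
  exact sw_counit_right x (fun b => f b 1) (h1 1)

lemma sw_cancel_right' (x : B) (f : B → B → M) (h1 : ∀ b, Lin k (fun a => f a b))
    (h2 : ∀ a, Lin k (fun b => f a b)) :
    sw k x (fun a b => sw k b (fun c d => f a (HopfAlgebra.antipode k c * d))) = f x 1 := by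
  simp only [fun a b => sw_antipode_mul (k := k) b (fun z => f a z) (h2 a)]
  exact sw_counit_right x (fun b => f b 1) (h1 1)

end Bi

end Sweedler

section RadfordAux

open HopfAlgebra Coalgebra

variable {M : Type*} [AddCommMonoid M] [Module k M]

lemma sw_antipode {B : Type*} [Ring B] [HopfAlgebra k B] (x : B) (f : B → B → M)
    (h1 : ∀ b, Lin k (fun a => f a b)) (h2 : ∀ a, Lin k (fun b => f a b)) :
    sw k (antipode k x) f = sw k x (fun a b => f (antipode k b) (antipode k a)) := by
  have key : (WithConv.toConv ((TensorProduct.map (antipode k) (antipode k)) ∘ₗ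
      (TensorProduct.comm k B B).toLinearMap ∘ₗ comul (R := k)) : WithConv (B →ₗ[k] B ⊗[k] B))
      = WithConv.toConv ((comul (R := k) (A := B)) ∘ₗ antipode k) := by
    refine left_inv_eq_right_inv (a := WithConv.toConv (comul (R := k) (A := B))) ?_
      LinearMap.comul_right_inv
    ext x
    rw [LinearMap.convMul_apply, LinearMap.convOne_apply]
    simp only [comul_sw, sw_map, TensorProduct.map_tmul, LinearMap.comp_apply,
      LinearEquiv.coe_coe, sw_mapE, TensorProduct.comm_tmul, sw_mul_left, sw_mul_right,
      LinearMap.mul'_apply, Algebra.TensorProduct.tmul_mul_tmul, WithConv.ofConv_toConv,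
      sw_tmul_left, sw_tmul_right]
    have e1 : ∀ a b : B, sw k b (fun e f => sw k a (fun c d =>
        (antipode k d * e) ⊗ₜ[k] (antipode k c * f))) = 
        sw k a (fun c d => sw k b (fun e f => (antipode k d * e) ⊗ₜ[k] (antipode k c * f))) :=
      fun a b => sw_comm _ _ _
    simp only [e1]
    rw [sw_coassoc x (fun c d b => sw k b (fun e f => 
      (antipode k d * e) ⊗ₜ[k] (antipode k c * f)))]
    simp only [fun c y : B => sw_cancel_left' (k := k) y (fun z f => z ⊗ₜ[k] (antipode k c * f))
      (fun _ => by fun_prop) (fun _ => by fun_prop)]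
    rw [sw_antipode_mul x (fun z => (1 : B) ⊗ₜ[k] z) (by fun_prop),
      Algebra.algebraMap_eq_smul_one]
    rfl
  have key2 : comul (R := k) (antipode k x) = (TensorProduct.map (antipode k) (antipode k)) 
     (TensorProduct.comm k B B (comul (R := k) x)) :=
    (LinearMap.congr_fun (congrArg WithConv.ofConv key) x).symm
  rw [sw_eq _ f h1 h2, key2, comul_sw]
  simp

lemma hom_antipode {B D : Type*} [Ring B] [HopfAlgebra k B] [Ring D] [HopfAlgebra k D]
    (φ : B →ₐc[k] D) (x : B) : φ (antipode k x) = antipode k (φ x) := by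
  have e : sw k x (fun a b => sw k b (fun c d => φ (antipode k a) * (φ c * antipode k (φ d)))) =
      φ (antipode k x) := by
    have : ∀ a b, sw k b (fun c d => φ (antipode k a) * (φ c * antipode k (φ d)))
      = counit (R := k) b • φ (antipode k a) := by
      intro a b
      rw [← sw_hom φ b (fun c d => φ (antipode k a) * (c * antipode k d)) (fun _ => by fun_prop)
        (fun _ => by fun_prop), sw_mul_antipode _ (fun z => φ (antipode k a) * z) (by fun_prop)]
      simp
    simp only [this]
    rw [sw_counit_right x (fun a => φ (antipode k a)) (by fun_prop)]
  rw [← e]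
  have e2 : ∀ a c d : B, φ (antipode k a) * (φ c * antipode k (φ d)) =
     φ (antipode k a * c) * antipode k (φ d) := by intros; simp [mul_assoc]
  simp only [e2]
  rw [sw_cancel_left' x (fun z d => φ z * antipode k (φ d)) (fun _ => by fun_prop)
    (fun _ => by fun_prop)]
  simp

variable {H : Type*} [Ring H] [HopfAlgebra k H]

/-- The projection `P(h) = h₍₁₎ ιπS(h₍₂₎)`. -/
def PP (π : H →ₐc[k] A) (ι : A →ₐc[k] H) : H →ₗ[k] H :=
  LinearMap.mul' k H ∘ₗ LinearMap.lTensor H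
          (ι.toLinearMap ∘ₗ π.toLinearMap ∘ₗ HopfAlgebra.antipode (R := k))
    ∘ₗ (Coalgebra.comul (R := k))

variable (π : H →ₐc[k] A) (ι : A →ₐc[k] H)

lemma PP_sw (h : H) : PP π ι h = sw k h (fun a b => a * ι (antipode k (π b))) := by
  simp only [PP, LinearMap.comp_apply, comul_sw, sw_map, LinearMap.lTensor_tmul,
    LinearMap.mul'_apply]
  simp only [← hom_antipode]
  rfl

lemma SK_sw (h : H) : coinvAntipode π ι h = sw k h (fun a b => ι (π a) * antipode k b) := by
  simp only [coinvAntipode, LinearMap.comp_apply, comul_sw, sw_map, TensorProduct.map_tmul,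
    LinearMap.mul'_apply]
  rfl

lemma mem_coinv (r : H) : r ∈ coinvariants π ↔ sw k r (fun a b => a ⊗ₜ[k] π b) = r ⊗ₜ[k] 1 := by
  rw [coinvariants, LinearMap.mem_ker, LinearMap.sub_apply, sub_eq_zero, LinearMap.comp_apply,
    comul_sw, sw_map]
  rfl

variable {π ι}

lemma sw_coinv {r : H} (hr : r ∈ coinvariants π) (f : H → A → M)
    (h1 : ∀ b, Lin k (fun a => f a b)) (h2 : ∀ a, Lin k (fun b => f a b)) :
    sw k r (fun a b => f a (π b)) = f r 1 := by
  rw [mem_coinv] at hr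
  have := congrArg (TensorProduct.lift (biMap h1 h2)) hr
  simpa using this

lemma sw_PP (h : H) (f : H → H → M)
    (h1 : ∀ b, Lin k (fun a => f a b)) (h2 : ∀ a, Lin k (fun b => f a b)) :
    sw k (PP π ι h) f =
      sw k h (fun a b => sw k b (fun c d => f (a * ι (antipode k (π d))) (PP π ι c))) := by
  rw [PP_sw, Lin.sw (k := k) (L := fun x => sw k x f) (by fun_prop)]
  have e1 : ∀ a b : H, sw k (a * ι (antipode k (π b))) f = sw k a (fun c d => sw k b (fun e g =>
      f (c * ι (antipode k (π g))) (d * ι (antipode k (π e))))) := by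
    intro a b
    rw [sw_mul _ _ _ h1 h2]
    congr 1; ext c d
    rw [sw_hom ι _ (fun e g => f (c * e) (d * g)) (fun _ => by fun_prop) (fun _ => by fun_prop),
      sw_antipode _ (fun e g => f (c * ι e) (d * ι g)) (fun _ => by fun_prop)
        (fun _ => by fun_prop),
      sw_hom π _ (fun e g => f (c * ι (antipode k g)) (d * ι (antipode k e)))
        (fun _ => by fun_prop) (fun _ => by fun_prop)]
  simp only [e1]
  rw [sw_coassoc h (fun c d b => sw k b (fun e g =>
      f (c * ι (antipode k (π g))) (d * ι (antipode k (π e)))))]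
  congr 1; ext a y
  rw [← sw_coassoc y (fun d e g => f (a * ι (antipode k (π g))) (d * ι (antipode k (π e))))]
  congr 1; ext z d
  rw [PP_sw, (h2 _).sw]

lemma counit_PP (h : H) : counit (R := k) (PP π ι h) = counit (R := k) h := by
  rw [PP_sw, sw_map]
  simp only [Bialgebra.counit_mul, CoalgHomClass.counit_comp_apply, HopfAlgebra.counit_antipode]
  simpa using sw_counit_left (k := k) h (fun b => counit (R := k) b) (by fun_prop)

lemma PP_mul (g h : H) : PP π ι (g * h) =
    sw k g (fun a b => a * PP π ι h * ι (antipode k (π b))) := by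
  rw [PP_sw, sw_mul _ _ _ (fun _ => by fun_prop) (fun _ => by fun_prop)]
  congr 1; ext a b
  rw [PP_sw]
  simp [HopfAlgebra.antipode_mul_antidistrib, mul_assoc]

lemma PP_coinv {r : H} (hr : r ∈ coinvariants π) : PP π ι r = r := by
  rw [PP_sw, sw_coinv hr (fun a b => a * ι (antipode k b)) (fun _ => by fun_prop)
    (fun _ => by fun_prop)]
  simp

lemma sw_lam {r : H} (hr : r ∈ coinvariants π) (f : H → H → M)
    (_h1 : ∀ b, Lin k (fun a => f a b)) (h2 : ∀ a, Lin k (fun b => f a b)) :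
    sw k r (fun a b => f a (PP π ι b)) = sw k r (fun a b => f a b) := by
  simp only [PP_sw, (h2 _).sw]
  rw [← sw_coassoc r (fun a c d => f a (c * ι (antipode k (π d)))),
    sw_coinv hr (fun z w => sw k z (fun a c => f a (c * ι (antipode k w))))
    (fun _ => by fun_prop) (fun _ => by fun_prop)]
  simp

lemma sw_PP_mul (h : H) (f : H → M) (hf : Lin k f) :
    sw k h (fun a b => f (PP π ι a * ι (π b))) = f h := by
  have e : ∀ a b : H, f (PP π ι a * ι (π b)) =
    sw k a (fun c d => f (c * ι (antipode k (π d) * π b))) := by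
    intro a b
    rw [PP_sw, sw_mul_left, hf.sw]
    simp [mul_assoc]
  simp only [e]
  rw [sw_coassoc h (fun c d b => f (c * ι (antipode k (π d) * π b)))]
  have e2 : ∀ a b : H, sw k b (fun d b => f (a * ι (antipode k (π d) * π b))) =
      counit (R := k) b • f a := by
    intro a b
    rw [← sw_hom π b (fun d b => f (a * ι (antipode k d * b))) (fun _ => by fun_prop)
      (fun _ => by fun_prop), sw_antipode_mul _ (fun z => f (a * ι z)) (by fun_prop)]
    simp
  simp only [e2]
  exact sw_counit_right h f hf

lemma π_PP (hπι : ∀ a : A, π (ι a) = a) (h : H) : π (PP π ι h) = counit (R := k) h • 1 := by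
  rw [PP_sw, sw_mapB]
  simp only [map_mul, hπι]
  rw [← sw_hom π h (fun a b => a * antipode k b) (fun _ => by fun_prop) (fun _ => by fun_prop),
    sw_mul_antipode _ (fun z => z) (by fun_prop)]
  simp

lemma PP_mem (hπι : ∀ a : A, π (ι a) = a) (h : H) : PP π ι h ∈ coinvariants π := by
  rw [mem_coinv, sw_PP _ _ (fun _ => by fun_prop) (fun _ => by fun_prop)]
  simp only [π_PP hπι, TensorProduct.tmul_smul]
  have : ∀ a b : H, sw k b (fun c d => counit (R := k) c • ((a * ι (antipode k (π d))) ⊗ₜ[k] (1 : A)))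
     = (a * ι (antipode k (π b))) ⊗ₜ[k] (1 : A) := fun a b =>
    sw_counit_left b (fun d => (a * ι (antipode k (π d))) ⊗ₜ[k] (1 : A)) (by fun_prop)
  simp only [this]
  rw [PP_sw, sw_tmul_left]

lemma PP_mul_PP (hπι : ∀ a : A, π (ι a) = a) (g h : H) : PP π ι (g * PP π ι h) = PP π ι (g * h) := by
  rw [PP_mul, PP_mul, PP_coinv (PP_mem hπι h)]

lemma PP_mul_ι (hπι : ∀ a : A, π (ι a) = a) (h : H) (a : A) : PP π ι (h * ι a) = counit (R := k) a • PP π ι h := by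
  have : PP π ι (ι a) = counit (R := k) a • 1 := by
    rw [PP_sw, sw_hom ι a (fun a b => a * ι (antipode k (π b))) (fun _ => by fun_prop)
      (fun _ => by fun_prop)]
    simp only [hπι, ← map_mul]
    rw [sw_mul_antipode a (fun z => ι z) (by fun_prop)]
    simp
  rw [PP_mul, this, PP_sw]
  simp [sw_smul]

lemma sw_PP_PP (hπι : ∀ a : A, π (ι a) = a) (h : H) (f : H → H → M)
    (h1 : ∀ b, Lin k (fun a => f a b)) (h2 : ∀ a, Lin k (fun b => f a b)) :
    sw k (PP π ι h) (fun a b => f (PP π ι a) b) =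
      sw k h (fun a b => f (PP π ι a) (PP π ι b)) := by
  rw [sw_PP _ _ (fun _ => by fun_prop) (fun _ => by fun_prop)]
  simp only [PP_mul_ι hπι, HopfAlgebra.counit_antipode, CoalgHomClass.counit_comp_apply,
    (h1 _).smul]
  congr 1; ext a b
  exact sw_counit_right b (fun c => f (PP π ι a) (PP π ι c)) (by fun_prop)

lemma SK_mul_ι (hπι : ∀ a : A, π (ι a) = a) (h : H) (a : A) :
    coinvAntipode π ι (h * ι a) = counit (R := k) a • coinvAntipode π ι h := by
  rw [SK_sw, sw_mul _ _ _ (fun _ => by fun_prop) (fun _ => by fun_prop), SK_sw, sw_smul]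
  congr 1; ext x y
  rw [sw_hom ι a (fun c d => ι (π (x * c)) * antipode k (y * d)) (fun _ => by fun_prop)
      (fun _ => by fun_prop)]
  have : ∀ c d : A, ι (π (x * ι c)) * antipode k (y * ι d) = 
    ι (π x) * ι (c * antipode k d) * antipode k y := by
    intro c d
    simp [HopfAlgebra.antipode_mul_antidistrib, hπι, mul_assoc, hom_antipode]
  simp only [this]
  rw [sw_mul_antipode a (fun z => ι (π x) * ι z * antipode k y) (by fun_prop)]
  simp

lemma SK_PP (hπι : ∀ a : A, π (ι a) = a) (h : H) : coinvAntipode π ι (PP π ι h) = coinvAntipode π ι h := by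
  rw [PP_sw, sw_map]
  simp only [SK_mul_ι hπι, HopfAlgebra.counit_antipode, CoalgHomClass.counit_comp_apply]
  exact sw_counit_right h (fun c => coinvAntipode π ι c) (by fun_prop)

lemma SK_mem (hπι : ∀ a : A, π (ι a) = a) (h : H) : coinvAntipode π ι h ∈ coinvariants π := by
  rw [mem_coinv, SK_sw, Lin.sw (k := k) (L := fun x => sw k x (fun a b => a ⊗ₜ[k] π b))
    (by fun_prop), sw_tmul_left]
  have e1 : ∀ a b : H, sw k (ι (π a) * antipode k b) (fun a b => a ⊗ₜ[k] π b) =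
      sw k a (fun c d => sw k b (fun e g =>
        (ι (π c) * antipode k g) ⊗ₜ[k] π (d * antipode k e))) := by
    intro a b
    rw [sw_mul _ _ _ (fun _ => by fun_prop) (fun _ => by fun_prop), 
      sw_hom ι _ (fun a b' => sw k (antipode k b) (fun c d => (a * c) ⊗ₜ[k] π (b' * d)))
        (fun _ => by fun_prop) (fun _ => by fun_prop),
      sw_hom π _ (fun a b' => sw k (antipode k b) (fun c d => (ι a * c) ⊗ₜ[k] π (ι b' * d)))
        (fun _ => by fun_prop) (fun _ => by fun_prop)]
    congr 1; ext c d
    rw [sw_antipode _ (fun e g => (ι (π c) * e) ⊗ₜ[k] π (ι (π d) * g))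
        (fun _ => by fun_prop) (fun _ => by fun_prop)]
    simp [hπι]
  simp only [e1]
  rw [sw_coassoc h (fun c d b => sw k b (fun e g =>
        (ι (π c) * antipode k g) ⊗ₜ[k] π (d * antipode k e)))]
  congr 1; ext a y
  rw [sw_cancel_left y (fun z g => (ι (π a) * antipode k g) ⊗ₜ[k] π z) (fun _ => by fun_prop)
    (fun _ => by fun_prop)]
  simp

end RadfordAux

section RadfordK

open HopfAlgebra Coalgebra

variable {M : Type*} [AddCommMonoid M] [Module k M]
variable {H : Type*} [Ring H] [HopfAlgebra k H]
variable {π : H →ₐc[k] A} {ι : A →ₐc[k] H} (hπι : ∀ a : A, π (ι a) = a)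

lemma sw_assoc_symm {C M N P : Type*} [AddCommGroup C] [Module k C] [Coalgebra k C]
    [AddCommMonoid M] [Module k M] [AddCommMonoid N] [Module k N] [AddCommMonoid P] [Module k P]
    (h : C) (f : C → C → M ⊗[k] (N ⊗[k] P)) :
    (TensorProduct.assoc k M N P).symm (sw k h f)
      = sw k h (fun a b => (TensorProduct.assoc k M N P).symm (f a b)) :=
  sw_map (TensorProduct.assoc k M N P).symm.toLinearMap h f

/-- The projection onto the coinvariants. -/
def Pk (hπι : ∀ a : A, π (ι a) = a) : H →ₗ[k] coinvariants π :=
  LinearMap.codRestrict _ (PP π ι) (PP_mem hπι)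

lemma Pk_val (h : H) : (Pk hπι h : H) = PP π ι h := rfl

lemma Pk_coe (r : coinvariants π) : Pk hπι (r : H) = r := Subtype.ext (PP_coinv r.2)

lemma Pk_mul_Pk (g h : H) : Pk hπι (g * (Pk hπι h : H)) = Pk hπι (g * h) :=
  Subtype.ext (PP_mul_PP hπι g h)

lemma Pk_mul_ι (h : H) (a : A) : Pk hπι (h * ι a) = counit (R := k) a • Pk hπι h :=
  Subtype.ext (PP_mul_ι hπι h a)

lemma one_mem_coinv : (1 : H) ∈ coinvariants π := by
  rw [mem_coinv, sw_one _ (fun _ => by fun_prop) (fun _ => by fun_prop)]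
  simp

lemma mul_mem_coinv {r s : H} (hr : r ∈ coinvariants π) (hs : s ∈ coinvariants π) :
    r * s ∈ coinvariants π := by
  rw [mem_coinv, sw_mul _ _ _ (fun _ => by fun_prop) (fun _ => by fun_prop)]
  simp only [map_mul]
  have : ∀ a b : H, sw k s (fun c d => (a * c) ⊗ₜ[k] (π b * π d)) = (a * s) ⊗ₜ[k] (π b * 1) :=
    fun a b => sw_coinv hs (fun c d => (a * c) ⊗ₜ[k] (π b * d)) (fun _ => by fun_prop)
      (fun _ => by fun_prop)
  simp only [this, mul_one]
  exact sw_coinv hr (fun a b => (a * s) ⊗ₜ[k] b) (fun _ => by fun_prop)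
      (fun _ => by fun_prop)

lemma Pk_mul (r s : coinvariants π) : (Pk hπι ((r : H) * s) : H) = r * s :=
  PP_coinv (mul_mem_coinv r.2 s.2)

lemma adAct_tmul (a : A) (x : H) :
    adAct ι (a ⊗ₜ[k] x) = sw k a (fun c d => ι c * x * ι (antipode k d)) := by
  simp only [adAct, LinearMap.comp_apply, LinearMap.rTensor_tmul, comul_sw, sw_map, sw_tmul_left,
    TensorProduct.map_tmul, LinearEquiv.coe_coe, sw_mapE, TensorProduct.assoc_tmul,
    LinearMap.lTensor_tmul, TensorProduct.comm_tmul, LinearMap.mul'_apply, mul_assoc]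
  rfl

lemma adAct_eq (hπι : ∀ a : A, π (ι a) = a) (a : A) (r : coinvariants π) :
    adAct ι (a ⊗ₜ[k] (r : H)) = PP π ι (ι a * r) := by
  rw [adAct_tmul, PP_mul, sw_hom ι _ _ (fun _ => by fun_prop) (fun _ => by fun_prop),
    PP_coinv r.2]
  simp [hπι]

lemma adCoact_sw (h : H) : adCoact π h = sw k h (fun a b => π a ⊗ₜ[k] b) := by
  simp only [adCoact, LinearMap.comp_apply, comul_sw, sw_map, LinearMap.rTensor_tmul]
  rfl

lemma coinvComul_sw (h : H) : coinvComul π ι h = sw k h (fun a b => PP π ι a ⊗ₜ[k] b) := by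
  simp only [coinvComul, LinearMap.comp_apply, comul_sw, sw_map, LinearMap.rTensor_tmul]
  simp only [PP, LinearMap.comp_apply, comul_sw, sw_map, sw_tmul_left]

/-- The action on the coinvariants. -/
def actK : A ⊗[k] coinvariants π →ₗ[k] coinvariants π :=
  TensorProduct.lift (biMap (k := k) (f := fun (a : A) (r : coinvariants π) => Pk hπι (ι a * (r : H)))
    (fun _ => by fun_prop) (fun _ => by fun_prop))

/-- The coaction on the coinvariants. -/
def coactK : coinvariants π →ₗ[k] A ⊗[k] coinvariants π :=
  Lin.toMap (k := k) (f := fun r : coinvariants π => sw k (r : H) (fun a b => π a ⊗ₜ[k] Pk hπι b)) (by fun_prop)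

/-- The multiplication on the coinvariants. -/
def mulK : coinvariants π ⊗[k] coinvariants π →ₗ[k] coinvariants π :=
  TensorProduct.lift (biMap (k := k)
    (f := fun (r s : coinvariants π) => Pk hπι ((r : H) * (s : H)))
    (fun _ => by fun_prop) (fun _ => by fun_prop))

/-- The comultiplication on the coinvariants. -/
def comulK : coinvariants π →ₗ[k] coinvariants π ⊗[k] coinvariants π :=
  Lin.toMap (k := k) (f := fun r : coinvariants π => sw k (r : H) (fun a b => Pk hπι a ⊗ₜ[k] Pk hπι b))
    (by fun_prop)

/-- The counit on the coinvariants. -/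
def counitK : coinvariants π →ₗ[k] k := counit (R := k) ∘ₗ (coinvariants π).subtype

/-- The antipode on the coinvariants. -/
def sK : coinvariants π →ₗ[k] coinvariants π :=
  Lin.toMap (k := k) (f := fun r : coinvariants π => Pk hπι (coinvAntipode π ι (r : H))) (by fun_prop)

lemma actK_tmul (a : A) (r : coinvariants π) :
    actK hπι (a ⊗ₜ[k] r) = Pk hπι (ι a * (r : H)) := rfl

lemma mulK_tmul (r s : coinvariants π) :
    mulK hπι (r ⊗ₜ[k] s) = Pk hπι ((r : H) * (s : H)) := rfl

lemma coactK_coe (r : coinvariants π) :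
    coactK hπι r = sw k (r : H) (fun a b => π a ⊗ₜ[k] Pk hπι b) := rfl

lemma comulK_coe (r : coinvariants π) :
    comulK hπι r = sw k (r : H) (fun a b => Pk hπι a ⊗ₜ[k] Pk hπι b) := rfl

lemma sK_coe (r : coinvariants π) :
    sK hπι r = Pk hπι (coinvAntipode π ι (r : H)) := rfl

lemma counitK_Pk (h : H) : counitK (Pk hπι h) = counit (R := k) h := counit_PP h

lemma Pk_PP (h : H) : Pk hπι (PP π ι h) = Pk hπι h := Pk_coe hπι (Pk hπι h)

lemma comulK_Pk (h : H) :
    comulK hπι (Pk hπι h) = sw k h (fun a b => Pk hπι a ⊗ₜ[k] Pk hπι b) := by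
  rw [comulK_coe, Pk_val]
  have := sw_PP_PP (k := k) hπι h (fun a b => Pk hπι a ⊗ₜ[k] Pk hπι b) (fun _ => by fun_prop)
    (fun _ => by fun_prop)
  simpa only [Pk_PP] using this

lemma sw_lamK (r : coinvariants π) (f : H → H → M)
    (h1 : ∀ b, Lin k (fun a => f a b)) (h2 : ∀ a, Lin k (fun b => f a b)) :
    sw k (r : H) (fun a b => f a (Pk hπι b : H)) = sw k (r : H) (fun a b => f a b) :=
  sw_lam (ι := ι) r.2 f h1 h2

lemma coactK_Pk (h : H) :
    coactK hπι (Pk hπι h) =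
      sw k h (fun a b => sw k b (fun c d => (π a * antipode k (π d)) ⊗ₜ[k] Pk hπι c)) := by
  rw [coactK_coe, Pk_val, sw_PP _ _ (fun _ => by fun_prop) (fun _ => by fun_prop)]
  simp only [Pk_PP, map_mul, hπι]

lemma π_coinv (r : coinvariants π) : π (r : H) = counit (R := k) (r : H) • 1 := by
  have := sw_coinv (k := k) r.2 (fun a b => counit (R := k) a • b) (fun _ => by fun_prop)
    (fun _ => by fun_prop)
  rw [← this, sw_counit_left _ (fun b => π b) (by fun_prop)]

theorem isYD_K : IsYD (actK hπι) (coactK hπι) where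
  act_one x := by simp [actK_tmul, Pk_coe]
  act_mul a a' x := by simp [actK_tmul, Pk_mul_Pk, mul_assoc]
  coassoc := by
    ext r
    simp only [LinearMap.comp_apply, LinearEquiv.coe_coe]
    rw [coactK_coe]
    simp only [sw_map, sw_mapE, LinearMap.rTensor_tmul, LinearMap.lTensor_tmul, comul_sw,
      sw_tmul_left, TensorProduct.assoc_tmul, coactK_coe, sw_tmul_right]
    rw [sw_lamK hπι r (fun a b => sw k b (fun c d => π a ⊗ₜ[k] (π c ⊗ₜ[k] Pk hπι d)))
      (fun _ => by fun_prop) (fun _ => by fun_prop),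
      ← sw_coassoc _ (fun a c d => π a ⊗ₜ[k] (π c ⊗ₜ[k] Pk hπι d))]
    congr 1; ext a b
    exact sw_hom π a (fun c d => c ⊗ₜ[k] (d ⊗ₜ[k] Pk hπι b))
      (fun _ => by fun_prop) (fun _ => by fun_prop)
  counit_coact := by
    ext1 r
    simp only [LinearMap.comp_apply, LinearEquiv.coe_coe]
    rw [coactK_coe]
    simp only [sw_map, sw_mapE, LinearMap.rTensor_tmul, TensorProduct.lid_tmul,
      CoalgHomClass.counit_comp_apply]
    rw [sw_counit_left _ (fun b => Pk hπι b) (by fun_prop), Pk_coe]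
    rfl
  yd := by
    ext a r : 3
    simp only [ydL, ydR, LinearMap.comp_apply, LinearEquiv.coe_coe, curry_apply,
      LinearMap.compr₂_apply, TensorProduct.mk_apply,
      TensorProduct.AlgebraTensorModule.curry_apply, LinearMap.restrictScalars_self]
    rw [TensorProduct.map_tmul, LinearMap.rTensor_tmul, coactK_coe, comul_sw]
    simp only [sw_map, sw_mapE, sw_tmul_left, sw_tmul_right, TensorProduct.map_tmul,
      TensorProduct.assoc_tmul, TensorProduct.assoc_symm_tmul, TensorProduct.comm_tmul,
      LinearMap.lTensor_tmul, LinearMap.rTensor_tmul, TensorProduct.tensorTensorTensorComm_tmul,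
      LinearMap.mul'_apply, actK_tmul, Pk_mul_Pk, coactK_Pk, LinearMap.id_apply,
      LinearEquiv.coe_coe, sw_assoc_symm]
    -- expand the coproduct of `ι x * r`
    have e1 : ∀ x y : A, sw k (ι x * (r : H)) (fun a b => sw k b (fun c d =>
        (π a * antipode k (π d) * y) ⊗ₜ[k] Pk hπι c)) =
        sw k (r : H) (fun e f => sw k x (fun a b => sw k b (fun c d =>
          (a * π e * (antipode k d * y)) ⊗ₜ[k] Pk hπι (ι c * f)))) := by
      intro x y
      rw [sw_mul _ _ _ (fun _ => by fun_prop) (fun _ => by fun_prop),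
        sw_hom ι x (fun a b => sw k (r : H) (fun c d => sw k (b * d) (fun c' d' =>
        (π (a * c) * antipode k (π d') * y) ⊗ₜ[k] Pk hπι c')))
         (fun _ => by fun_prop) (fun _ => by fun_prop), sw_comm]
      have e2 : ∀ e f x1 x2, sw k (ι x2 * f) (fun c' d' =>
          (π (ι x1 * e) * antipode k (π d') * y) ⊗ₜ[k] Pk hπι c') =
          sw k f (fun g f' => sw k x2 (fun c d => 
           (x1 * π e * (antipode k (π f') * antipode k d * y)) ⊗ₜ[k] Pk hπι (ι c * g))) := by
        intro e f x1 x2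
        rw [sw_mul _ _ _ (fun _ => by fun_prop) (fun _ => by fun_prop),
          sw_hom ι x2 (fun a b => sw k f (fun c d =>
        (π (ι x1 * e) * antipode k (π (b * d)) * y) ⊗ₜ[k] Pk hπι (a * c)))
         (fun _ => by fun_prop) (fun _ => by fun_prop), sw_comm]
        simp [hπι, HopfAlgebra.antipode_mul_antidistrib, mul_assoc]
      simp only [e2]
      have e3 : ∀ e f : H, sw k x (fun a b => sw k f (fun g f' => sw k b (fun c d => 
           (a * π e * (antipode k (π f') * antipode k d * y)) ⊗ₜ[k] Pk hπι (ι c * g)))) =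
           sw k f (fun g f' => sw k x (fun a b => sw k b (fun c d => 
           (a * π e * (antipode k (π f') * antipode k d * y)) ⊗ₜ[k] Pk hπι (ι c * g)))) :=
        fun e f => sw_comm _ _ _
      simp only [e3]
      rw [← sw_coassoc (r : H) (fun e g f' => sw k x (fun a b => sw k b (fun c d => 
           (a * π e * (antipode k (π f') * antipode k d * y)) ⊗ₜ[k] Pk hπι (ι c * g)))),
        sw_coinv r.2 (fun z w => sw k z (fun e g => sw k x (fun a b => sw k b (fun c d => 
           (a * π e * (antipode k w * antipode k d * y)) ⊗ₜ[k] Pk hπι (ι c * g)))))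
          (fun _ => by fun_prop) (fun _ => by fun_prop)]
      simp
    simp only [e1]
    rw [sw_comm a (r : H) (fun x y e f => sw k x (fun a b => sw k b (fun c d =>
          (a * π e * (antipode k d * y)) ⊗ₜ[k] Pk hπι (ι c * f))))]
    simp only [sw_coassoc a (fun a b y => sw k b (fun c d =>
          (a * π _ * (antipode k d * y)) ⊗ₜ[k] Pk hπι (ι c * _)))]
    have e5 : ∀ e f : H, ∀ x y : A, sw k y (fun b z => sw k b (fun c d =>
          (x * π e * (antipode k d * z)) ⊗ₜ[k] Pk hπι (ι c * f))) = 
          (x * π e) ⊗ₜ[k] Pk hπι (ι y * f) := by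
      intro e f x y
      rw [sw_coassoc y (fun c d z => (x * π e * (antipode k d * z)) ⊗ₜ[k] Pk hπι (ι c * f)),
        sw_cancel_right' y (fun c w => (x * π e * w) ⊗ₜ[k] Pk hπι (ι c * f))
        (fun _ => by fun_prop) (fun _ => by fun_prop), mul_one]
    simp only [e5]

end RadfordK

section RadfordK2

open HopfAlgebra Coalgebra

variable {M : Type*} [AddCommMonoid M] [Module k M]
variable {H : Type*} [Ring H] [HopfAlgebra k H]
variable {π : H →ₐc[k] A} {ι : A →ₐc[k] H} (hπι : ∀ a : A, π (ι a) = a)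

lemma act_comp : (coinvariants π).subtype ∘ₗ actK hπι
          = adAct ι ∘ₗ LinearMap.lTensor A (coinvariants π).subtype := by
  ext a r
  simp [actK_tmul, adAct_eq hπι, Pk_val]

lemma coact_comp : LinearMap.lTensor A (coinvariants π).subtype ∘ₗ coactK hπι
          = adCoact π ∘ₗ (coinvariants π).subtype := by
  ext r
  simp only [LinearMap.comp_apply, coactK_coe, sw_map, LinearMap.lTensor_tmul,
    Submodule.subtype_apply, adCoact_sw]
  exact sw_lamK hπι r (fun a b => π a ⊗ₜ[k] b) (fun _ => by fun_prop) (fun _ => by fun_prop)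

lemma mul_comp : (coinvariants π).subtype ∘ₗ mulK hπι
          = LinearMap.mul' k H
            ∘ₗ TensorProduct.map (coinvariants π).subtype (coinvariants π).subtype := by
  ext r s
  simp [mulK_tmul, Pk_mul]

lemma comul_comp : TensorProduct.map (coinvariants π).subtype (coinvariants π).subtype
      ∘ₗ comulK hπι = coinvComul π ι ∘ₗ (coinvariants π).subtype := by
  ext r
  simp only [LinearMap.comp_apply, comulK_coe, sw_map, TensorProduct.map_tmul,
    Submodule.subtype_apply, coinvComul_sw]
  exact sw_lamK hπι r (fun a b => PP π ι a ⊗ₜ[k] b) (fun _ => by fun_prop) (fun _ => by fun_prop)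

lemma sK_comp : (coinvariants π).subtype ∘ₗ sK hπι
    = coinvAntipode π ι ∘ₗ (coinvariants π).subtype := by
  ext r
  exact PP_coinv (SK_mem hπι _)

lemma mulK_assoc : mulK hπι ∘ₗ LinearMap.rTensor ↥(coinvariants π) (mulK hπι)
          = mulK hπι ∘ₗ LinearMap.lTensor ↥(coinvariants π) (mulK hπι)
            ∘ₗ (TensorProduct.assoc k ↥(coinvariants π) ↥(coinvariants π)
                ↥(coinvariants π)).toLinearMap := by
  ext r s t
  simp only [LinearMap.comp_apply, LinearEquiv.coe_coe, curry_apply,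
      LinearMap.compr₂_apply, LinearMap.compr₂ₛₗ_apply, TensorProduct.mk_apply, TensorProduct.assoc_tmul,
      TensorProduct.AlgebraTensorModule.curry_apply, LinearMap.restrictScalars_self,
      LinearMap.rTensor_tmul, LinearMap.lTensor_tmul, mulK_tmul, Pk_mul, mul_assoc]

lemma comulK_coassoc : (TensorProduct.assoc k ↥(coinvariants π) ↥(coinvariants π)
            ↥(coinvariants π)).toLinearMap
          ∘ₗ LinearMap.rTensor ↥(coinvariants π) (comulK hπι) ∘ₗ comulK hπι
        = LinearMap.lTensor ↥(coinvariants π) (comulK hπι) ∘ₗ comulK hπι := by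
  ext1 r
  simp only [LinearMap.comp_apply, LinearEquiv.coe_coe]
  rw [comulK_coe]
  simp only [sw_map, sw_mapE, LinearMap.rTensor_tmul, LinearMap.lTensor_tmul, comulK_Pk,
      sw_tmul_left, TensorProduct.assoc_tmul, sw_tmul_right]
  exact sw_coassoc (r : H) (fun a b c => Pk hπι a ⊗ₜ[k] (Pk hπι b ⊗ₜ[k] Pk hπι c))

lemma comulK_counit_left : (TensorProduct.lid k ↥(coinvariants π)).toLinearMap
          ∘ₗ LinearMap.rTensor ↥(coinvariants π) counitK ∘ₗ comulK hπι = LinearMap.id := by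
  ext1 r
  simp only [LinearMap.comp_apply, LinearEquiv.coe_coe]
  rw [comulK_coe]
  simp only [sw_map, sw_mapE, LinearMap.rTensor_tmul, counitK_Pk, TensorProduct.lid_tmul]
  rw [sw_counit_left _ (fun b => Pk hπι b) (by fun_prop), Pk_coe]
  rfl

lemma comulK_counit_right : (TensorProduct.rid k ↥(coinvariants π)).toLinearMap
          ∘ₗ LinearMap.lTensor ↥(coinvariants π) counitK ∘ₗ comulK hπι = LinearMap.id := by
  ext1 r
  simp only [LinearMap.comp_apply, LinearEquiv.coe_coe]
  rw [comulK_coe]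
  simp only [sw_map, sw_mapE, LinearMap.lTensor_tmul, counitK_Pk, TensorProduct.rid_tmul]
  rw [sw_counit_right _ (fun b => Pk hπι b) (by fun_prop), Pk_coe]
  rfl

lemma actK_one (a : A) : actK hπι (a ⊗ₜ[k] ⟨1, one_mem_coinv⟩) =
    counit (R := k) a • (⟨1, one_mem_coinv⟩ : coinvariants π) := by
  have h1 : Pk hπι 1 = (⟨1, one_mem_coinv⟩ : coinvariants π) :=
    Pk_coe hπι ⟨1, one_mem_coinv⟩
  have := Pk_mul_ι hπι 1 a
  rw [h1, one_mul] at this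
  rw [actK_tmul, ← this, mul_one]

lemma coactK_one : coactK hπι ⟨1, one_mem_coinv⟩ = (1 : A) ⊗ₜ[k] ⟨1, one_mem_coinv⟩ := by
  have h1 : Pk hπι 1 = (⟨1, one_mem_coinv⟩ : coinvariants π) :=
    Pk_coe hπι ⟨1, one_mem_coinv⟩
  rw [coactK_coe, sw_one _ (fun _ => by fun_prop) (fun _ => by fun_prop), h1, map_one]

lemma comulK_one : comulK hπι ⟨1, one_mem_coinv⟩ =
    (⟨1, one_mem_coinv⟩ : coinvariants π) ⊗ₜ[k] ⟨1, one_mem_coinv⟩ := by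
  have h1 : Pk hπι 1 = (⟨1, one_mem_coinv⟩ : coinvariants π) :=
    Pk_coe hπι ⟨1, one_mem_coinv⟩
  rw [comulK_coe, sw_one _ (fun _ => by fun_prop) (fun _ => by fun_prop), h1]

lemma counitK_act (a : A) (r : coinvariants π) :
    counitK (actK hπι (a ⊗ₜ[k] r)) = counit (R := k) a * counitK r := by
  rw [actK_tmul, counitK_Pk, Bialgebra.counit_mul, CoalgHomClass.counit_comp_apply]
  rfl

lemma counitK_coact (r : coinvariants π) :
    (TensorProduct.rid k A) (LinearMap.lTensor A counitK (coactK hπι r))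
            = counitK r • (1 : A) := by
  rw [coactK_coe]
  simp only [sw_map, sw_mapE, LinearMap.lTensor_tmul, counitK_Pk, TensorProduct.rid_tmul]
  rw [sw_counit_right _ (fun b => π b) (by fun_prop), π_coinv]
  rfl

/-- The key identity `a₍₁₎ · r ι(a₍₂₎) = ι(a) r`. -/
lemma sw_key (hπι : ∀ a : A, π (ι a) = a) (a : A) (r : coinvariants π) (f : H → M) (hf : Lin k f) :
    sw k a (fun x y => f (PP π ι (ι x * r) * ι y)) = f (ι a * r) := by
  rw [← sw_PP_mul (π := π) (ι := ι) (ι a * (r : H)) f hf,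
    sw_mul _ _ _ (fun _ => by fun_prop) (fun _ => by fun_prop),
    sw_hom ι _ _ (fun _ => by fun_prop) (fun _ => by fun_prop)]
  congr 1; ext x y
  have := sw_coinv r.2 (fun c d => f (PP π ι (ι x * c) * ι (y * d)))
    (fun _ => by fun_prop) (fun _ => by fun_prop)
  simp only [map_mul, hπι] at this ⊢
  rw [this]
  simp

lemma act_mul_K : actK hπι ∘ₗ LinearMap.lTensor A (mulK hπι)
    = mulK hπι ∘ₗ tAct (actK hπι) (actK hπι) := by
  apply TensorProduct.ext
  ext a : 1
  apply TensorProduct.ext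
  ext r s : 2
  simp only [tAct, LinearMap.comp_apply, LinearEquiv.coe_coe, curry_apply,
      LinearMap.compr₂_apply, LinearMap.compr₂ₛₗ_apply, TensorProduct.mk_apply, TensorProduct.assoc_tmul,
      TensorProduct.AlgebraTensorModule.curry_apply, LinearMap.restrictScalars_self,
      LinearMap.rTensor_tmul, LinearMap.lTensor_tmul, mulK_tmul, actK_tmul, comul_sw,
      sw_tmul_left, sw_map, sw_mapE, TensorProduct.tensorTensorTensorComm_tmul,
      TensorProduct.map_tmul, Pk_mul_Pk]
  have := sw_key hπι a r (fun z => Pk hπι (z * (s : H))) (by fun_prop)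
  simp only [Pk_val, mul_assoc] at this ⊢
  exact this.symm

lemma coact_mul_K : coactK hπι ∘ₗ mulK hπι
    = LinearMap.lTensor A (mulK hπι) ∘ₗ tCoact (coactK hπι) (coactK hπι) := by
  ext r s : 3
  simp only [tCoact, LinearMap.comp_apply, LinearEquiv.coe_coe, curry_apply,
      LinearMap.compr₂_apply, LinearMap.compr₂ₛₗ_apply, TensorProduct.mk_apply,
      TensorProduct.AlgebraTensorModule.curry_apply, LinearMap.restrictScalars_self,
      LinearMap.rTensor_tmul, LinearMap.lTensor_tmul, mulK_tmul, coactK_coe, Pk_mul,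
      sw_tmul_left, sw_tmul_right, sw_map, sw_mapE, TensorProduct.tensorTensorTensorComm_tmul,
      TensorProduct.map_tmul, Pk_mul_Pk, LinearMap.mul'_apply]
  have e : ∀ c d : H, sw k (r : H) (fun a b =>
      (π a * π c) ⊗ₜ[k] Pk hπι ((Pk hπι b : H) * d)) = sw k (r : H) (fun a b =>
      (π a * π c) ⊗ₜ[k] Pk hπι (b * d)) := fun c d => 
    sw_lamK hπι r (fun a b => (π a * π c) ⊗ₜ[k] Pk hπι (b * d)) 
      (fun _ => by fun_prop) (fun _ => by fun_prop)
  rw [sw_mul _ _ _ (fun _ => by fun_prop) (fun _ => by fun_prop)]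
  simp only [e, map_mul]
  rw [sw_comm]

lemma comul_act_K : comulK hπι ∘ₗ actK hπι
    = tAct (actK hπι) (actK hπι) ∘ₗ LinearMap.lTensor A (comulK hπι) := by
  ext a r : 3
  simp only [tAct, LinearMap.comp_apply, LinearEquiv.coe_coe, curry_apply,
      LinearMap.compr₂_apply, LinearMap.compr₂ₛₗ_apply, TensorProduct.mk_apply,
      TensorProduct.AlgebraTensorModule.curry_apply, LinearMap.restrictScalars_self,
      LinearMap.rTensor_tmul, LinearMap.lTensor_tmul, comul_sw, comulK_coe hπι r,
      actK_tmul, comulK_Pk,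
      sw_tmul_left, sw_tmul_right, sw_map, sw_mapE, TensorProduct.tensorTensorTensorComm_tmul,
      TensorProduct.map_tmul, Pk_mul_Pk, LinearMap.mul'_apply]
  rw [sw_mul _ _ _ (fun _ => by fun_prop) (fun _ => by fun_prop),
    sw_hom ι _ _ (fun _ => by fun_prop) (fun _ => by fun_prop)]
  first | done | rw [sw_comm]

lemma coact_comul_K : LinearMap.lTensor A (comulK hπι) ∘ₗ coactK hπι
    = tCoact (coactK hπι) (coactK hπι) ∘ₗ comulK hπι := by
  ext1 r
  simp only [tCoact, LinearMap.comp_apply, LinearEquiv.coe_coe, comulK_coe hπι r,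
    coactK_coe hπι r,
    sw_map, sw_mapE, LinearMap.lTensor_tmul, comulK_Pk, TensorProduct.map_tmul, sw_tmul_right]
  have := sw_lamK hπι r (fun a b => (LinearMap.mul' k A).rTensor _
     ((TensorProduct.tensorTensorTensorComm k A (coinvariants π) A (coinvariants π)) 
       (coactK hπι (Pk hπι a) ⊗ₜ[k] sw k b (fun e f => π e ⊗ₜ[k] Pk hπι f))))
      (fun _ => by fun_prop) (fun _ => by fun_prop)
  refine Eq.trans ?_ this.symm
  simp only [coactK_Pk, sw_tmul_left, sw_tmul_right, sw_map, sw_mapE, 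
    TensorProduct.tensorTensorTensorComm_tmul, LinearMap.rTensor_tmul, LinearMap.mul'_apply]
  have e1 : ∀ a b : H, sw k b (fun e f => sw k a (fun x y => sw k y (fun c d =>
      (π x * antipode k (π d) * π e) ⊗ₜ[k] (Pk hπι c ⊗ₜ[k] Pk hπι f)))) =
      sw k a (fun x y => sw k y (fun c d => sw k b (fun e f =>
      (π x * antipode k (π d) * π e) ⊗ₜ[k] (Pk hπι c ⊗ₜ[k] Pk hπι f)))) := by
    intro a b
    rw [sw_comm b a (fun e f x y => sw k y (fun c d =>
      (π x * antipode k (π d) * π e) ⊗ₜ[k] (Pk hπι c ⊗ₜ[k] Pk hπι f)))]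
    congr 1; ext x y
    exact sw_comm b y (fun e f c d =>
      (π x * antipode k (π d) * π e) ⊗ₜ[k] (Pk hπι c ⊗ₜ[k] Pk hπι f))
  simp only [e1]
  rw [sw_coassoc (r : H) (fun x y b => sw k y (fun c d => sw k b (fun e f =>
      (π x * antipode k (π d) * π e) ⊗ₜ[k] (Pk hπι c ⊗ₜ[k] Pk hπι f))))]
  congr 1; ext x b
  rw [sw_coassoc b (fun c d z => sw k z (fun e f =>
      (π x * antipode k (π d) * π e) ⊗ₜ[k] (Pk hπι c ⊗ₜ[k] Pk hπι f)))]
  congr 1; ext c z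
  have := sw_cancel_left' z (fun w f => (π x * π w) ⊗ₜ[k] (Pk hπι c ⊗ₜ[k] Pk hπι f))
    (fun _ => by fun_prop) (fun _ => by fun_prop)
  simp only [map_mul, hom_antipode, map_one, mul_one, ← mul_assoc] at this
  exact this.symm

lemma braid_K : comulK hπι ∘ₗ mulK hπι
          = LinearMap.lTensor ↥(coinvariants π) (mulK hπι)
            ∘ₗ (TensorProduct.assoc k ↥(coinvariants π) ↥(coinvariants π)
                ↥(coinvariants π)).toLinearMap
            ∘ₗ LinearMap.rTensor ↥(coinvariants π)
                (LinearMap.rTensor ↥(coinvariants π) (mulK hπι))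
            ∘ₗ LinearMap.rTensor ↥(coinvariants π)
                (TensorProduct.assoc k ↥(coinvariants π) ↥(coinvariants π)
                  ↥(coinvariants π)).symm.toLinearMap
            ∘ₗ LinearMap.rTensor ↥(coinvariants π)
                (LinearMap.lTensor ↥(coinvariants π) (ydBraid (coactK hπι) (actK hπι)))
            ∘ₗ LinearMap.rTensor ↥(coinvariants π)
                (TensorProduct.assoc k ↥(coinvariants π) ↥(coinvariants π)
                  ↥(coinvariants π)).toLinearMap
            ∘ₗ (TensorProduct.assoc k
                (↥(coinvariants π) ⊗[k] ↥(coinvariants π)) ↥(coinvariants π)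
                ↥(coinvariants π)).symm.toLinearMap
            ∘ₗ TensorProduct.map (comulK hπι) (comulK hπι) := by
  ext r s : 3
  simp only [ydBraid, LinearMap.comp_apply, LinearEquiv.coe_coe, curry_apply,
      LinearMap.compr₂_apply, LinearMap.compr₂ₛₗ_apply, TensorProduct.mk_apply,
      TensorProduct.AlgebraTensorModule.curry_apply, LinearMap.restrictScalars_self,
      mulK_tmul, comulK_Pk, TensorProduct.map_tmul]
  rw [comulK_coe, comulK_coe]
  simp only [LinearMap.comp_apply, LinearEquiv.coe_coe, sw_tmul_left, sw_tmul_right, sw_map,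
    sw_mapE, sw_assoc_symm, TensorProduct.assoc_tmul, TensorProduct.assoc_symm_tmul,
    LinearMap.rTensor_tmul, LinearMap.lTensor_tmul, TensorProduct.comm_tmul, 
    mulK_tmul, actK_tmul, Pk_mul_Pk, coactK_coe]
  rw [sw_mul _ _ _ (fun _ => by fun_prop) (fun _ => by fun_prop), sw_comm]
  congr 1; ext c d
  rw [sw_lamK hπι r (fun a b => sw k b (fun e f =>
    Pk hπι ((Pk hπι a : H) * (ι (π e) * c)) ⊗ₜ[k] Pk hπι ((Pk hπι f : H) * d)))
    (fun _ => by fun_prop) (fun _ => by fun_prop),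
    ← sw_coassoc (r : H) (fun a e f =>
    Pk hπι ((Pk hπι a : H) * (ι (π e) * c)) ⊗ₜ[k] Pk hπι ((Pk hπι f : H) * d))]
  have e1 : ∀ z f : H, sw k z (fun a e =>
      Pk hπι ((Pk hπι a : H) * (ι (π e) * c)) ⊗ₜ[k] Pk hπι ((Pk hπι f : H) * d)) =
      Pk hπι (z * c) ⊗ₜ[k] Pk hπι ((Pk hπι f : H) * d) := by
    intro z f
    simp only [← mul_assoc]
    exact sw_PP_mul z (fun w => Pk hπι (w * c) ⊗ₜ[k] Pk hπι ((Pk hπι f : H) * d)) (by fun_prop)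
  simp only [e1]
  exact (sw_lamK hπι r (fun z f => Pk hπι (z * c) ⊗ₜ[k] Pk hπι (f * d))
    (fun _ => by fun_prop) (fun _ => by fun_prop)).symm

lemma antipode_left_K (r : coinvariants π) :
    mulK hπι (LinearMap.rTensor ↥(coinvariants π) (sK hπι) (comulK hπι r))
      = counitK r • ⟨1, one_mem_coinv⟩ := by
  apply Subtype.ext
  simp only [comulK_coe, sw_map, LinearMap.rTensor_tmul, mulK_tmul, sK_coe, Pk_val, SK_PP hπι,
    PP_mul_PP hπι, sw_coe, PP_coinv (SK_mem hπι _)]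
  simp only [SK_sw, sw_mul_left, sw_map]
  rw [sw_coassoc (r : H) (fun c d b => PP π ι (ι (π c) * antipode k d * b))]
  simp only [mul_assoc]
  rw [sw_cancel_right' (r : H) (fun a b => PP π ι (ι (π a) * b))
    (fun _ => by fun_prop) (fun _ => by fun_prop), π_coinv]
  have := PP_coinv (π := π) (ι := ι) one_mem_coinv
  simp [this, counitK]

lemma antipode_right_K (r : coinvariants π) :
    mulK hπι (LinearMap.lTensor ↥(coinvariants π) (sK hπι) (comulK hπι r))
      = counitK r • ⟨1, one_mem_coinv⟩ := by
  apply Subtype.ext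
  simp only [comulK_coe, sw_map, LinearMap.lTensor_tmul, mulK_tmul, sK_coe, Pk_mul]
  simp only [Pk_val, SK_PP hπι, sw_coe, PP_coinv (SK_mem hπι _)]
  simp only [SK_sw, sw_mul_right, sw_map]
  rw [← sw_coassoc (r : H) (fun a c d => PP π ι (PP π ι a * (ι (π c) * antipode k d)))]
  simp only [← mul_assoc]
  simp only [fun a b : H => sw_PP_mul (π := π) (ι := ι) a (fun z => PP π ι (z * antipode k b))
    (by fun_prop)]
  rw [sw_mul_antipode _ (fun z => PP π ι z) (by fun_prop)]
  have := PP_coinv (π := π) (ι := ι) one_mem_coinv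
  simp [this, counitK]

/-- The isomorphism. -/
def isoK (π : H →ₐc[k] A) (ι : A →ₐc[k] H) : coinvariants π ⊗[k] A →ₗ[k] H :=
  LinearMap.mul' k H ∘ₗ TensorProduct.map (coinvariants π).subtype ι.toLinearMap

lemma isoK_tmul (r : coinvariants π) (a : A) : isoK π ι (r ⊗ₜ[k] a) = (r : H) * ι a := rfl

lemma isoK_bij (hπι : ∀ a : A, π (ι a) = a) : Function.Bijective (isoK π ι) := by
  let g : H →ₗ[k] coinvariants π ⊗[k] A := Lin.toMap (k := k)
    (f := fun h : H => sw k h (fun a b => Pk hπι a ⊗ₜ[k] π b)) (by fun_prop)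
  have hg : ∀ h, g h = sw k h (fun a b => Pk hπι a ⊗ₜ[k] π b) := fun _ => rfl
  have h1 : g ∘ₗ isoK π ι = LinearMap.id := by
    apply TensorProduct.ext
    ext r a : 2
    simp only [LinearMap.comp_apply, LinearMap.compr₂_apply, LinearMap.compr₂ₛₗ_apply, TensorProduct.mk_apply, isoK_tmul,
      hg, LinearMap.id_apply]
    rw [sw_mul _ _ _ (fun _ => by fun_prop) (fun _ => by fun_prop)]
    have e : ∀ x y : H, sw k (ι a) (fun c d => Pk hπι (x * c) ⊗ₜ[k] π (y * d)) =
        Pk hπι x ⊗ₜ[k] (π y * a) := by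
      intro x y
      rw [sw_hom ι _ _ (fun _ => by fun_prop) (fun _ => by fun_prop)]
      simp only [Pk_mul_ι, map_mul, hπι, ← TensorProduct.smul_tmul']
      exact sw_counit_left a (fun z => Pk hπι x ⊗ₜ[k] (π y * z)) (by fun_prop)
    simp only [e]
    rw [sw_coinv r.2 (fun x y => Pk hπι x ⊗ₜ[k] (y * a)) (fun _ => by fun_prop)
      (fun _ => by fun_prop), Pk_coe, one_mul]
  have h2 : ∀ h, isoK π ι (g h) = h := by
    intro h
    simp only [hg, sw_map, isoK_tmul, Pk_val]
    exact sw_PP_mul h (fun z => z) (by fun_prop)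
  exact ⟨Function.LeftInverse.injective (g := g) (fun x => LinearMap.congr_fun h1 x),
    Function.RightInverse.surjective (g := g) h2⟩

lemma isoK_mul : isoK π ι ∘ₗ biMulG (mulK hπι) (actK hπι)
    = LinearMap.mul' k H ∘ₗ TensorProduct.map (isoK π ι) (isoK π ι) := by
  apply TensorProduct.ext
  apply TensorProduct.ext
  ext r a : 2
  apply TensorProduct.ext
  ext s b : 2
  simp only [biMulG, LinearMap.comp_apply, LinearEquiv.coe_coe, LinearMap.compr₂_apply, LinearMap.compr₂ₛₗ_apply,
    TensorProduct.mk_apply, comul_sw, sw_tmul_left, sw_tmul_right, sw_map, sw_mapE,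
    sw_assoc_symm, TensorProduct.assoc_tmul, TensorProduct.assoc_symm_tmul,
    LinearMap.rTensor_tmul, LinearMap.lTensor_tmul, TensorProduct.map_tmul,
    TensorProduct.tensorTensorTensorComm_tmul, LinearMap.mul'_apply, actK_tmul, mulK_tmul,
    isoK_tmul, Pk_mul, map_mul]
  simp only [Pk_val]
  have := sw_key hπι a s (fun z => (r : H) * z * ι b) (by fun_prop)
  simp only [mul_assoc] at this ⊢
  exact this

lemma isoK_comul : comul (R := k) ∘ₗ isoK π ι
    = TensorProduct.map (isoK π ι) (isoK π ι) ∘ₗ biComulG (comulK hπι) (coactK hπι) := by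
  apply TensorProduct.ext
  ext r a : 2
  simp only [biComulG, LinearMap.comp_apply, LinearEquiv.coe_coe, LinearMap.compr₂_apply, LinearMap.compr₂ₛₗ_apply,
    TensorProduct.mk_apply, TensorProduct.map_tmul, isoK_tmul]
  rw [comulK_coe, comul_sw, comul_sw]
  simp only [LinearMap.comp_apply, LinearEquiv.coe_coe,
    sw_tmul_left, sw_tmul_right, sw_map, sw_mapE,
    sw_assoc_symm, TensorProduct.assoc_tmul, TensorProduct.assoc_symm_tmul,
    LinearMap.rTensor_tmul, LinearMap.lTensor_tmul, TensorProduct.map_tmul,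
    TensorProduct.tensorTensorTensorComm_tmul, LinearMap.mul'_apply, coactK_coe,
    isoK_tmul, map_mul]
  rw [sw_mul _ _ _ (fun _ => by fun_prop) (fun _ => by fun_prop), sw_comm,
    sw_hom ι _ _ (fun _ => by fun_prop) (fun _ => by fun_prop)]
  congr 1; ext c d
  rw [sw_lamK hπι r (fun a b => sw k b (fun e f =>
    ((Pk hπι a : H) * (ι (π e) * ι c)) ⊗ₜ[k] ((Pk hπι f : H) * ι d)))
    (fun _ => by fun_prop) (fun _ => by fun_prop),
    ← sw_coassoc (r : H) (fun a e f =>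
    ((Pk hπι a : H) * (ι (π e) * ι c)) ⊗ₜ[k] ((Pk hπι f : H) * ι d))]
  have e1 : ∀ z f : H, sw k z (fun a e =>
      ((Pk hπι a : H) * (ι (π e) * ι c)) ⊗ₜ[k] ((Pk hπι f : H) * ι d)) =
      (z * ι c) ⊗ₜ[k] ((Pk hπι f : H) * ι d) := by
    intro z f
    simp only [← mul_assoc]
    exact sw_PP_mul z (fun w => (w * ι c) ⊗ₜ[k] ((Pk hπι f : H) * ι d)) (by fun_prop)
  simp only [e1]
  exact (sw_lamK hπι r (fun z f => (z * ι c) ⊗ₜ[k] (f * ι d))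
    (fun _ => by fun_prop) (fun _ => by fun_prop)).symm

lemma isoK_counit : counit (R := k) ∘ₗ isoK π ι = biCounitG (A := A) counitK := by
  apply TensorProduct.ext
  ext r a : 2
  simp [biCounitG, isoK_tmul, counitK, Bialgebra.counit_mul]

end RadfordK2

/-- **Radford projection theorem.** Let `π : H → A` and `ι : A → H`
be Hopf algebra maps with `π ∘ ι = id`, and let `K` be the coinvariants of `π`.
Then (1) `K` is a unital subalgebra of `H`; (2) the adjoint action and the coaction
`r ↦ π(r₍₁₎) ⊗ r₍₂₎` make `K` a Yetter–Drinfel'd module over `A`; (3) together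
with `Δ_K`, `ε_K = ε_H|_K` and `S_K`, `K` is a Hopf algebra in the category of
`A`-Yetter–Drinfel'd modules; and (4) `r ⊗ a ↦ r ι(a)` is an isomorphism of Hopf
algebras from the Radford biproduct `K ⋊ A` to `H`. -/
theorem radford_projection (π : H →ₐc[k] A) (ι : A →ₐc[k] H)
    (hπι : ∀ a : A, π (ι a) = a) :
    -- (1) the coinvariants form a unital subalgebra
    ((1 : H) ∈ coinvariants π
      ∧ ∀ r s : H, r ∈ coinvariants π → s ∈ coinvariants π → r * s ∈ coinvariants π)
    -- (2) the adjoint action and the coaction restrict to the coinvariants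
    ∧ (∀ (a : A) (r : H), r ∈ coinvariants π → adAct ι (a ⊗ₜ[k] r) ∈ coinvariants π)
    ∧ (∀ r ∈ coinvariants π, adCoact π r
        ∈ LinearMap.range (LinearMap.lTensor A (coinvariants π).subtype))
    -- (3) `Δ_K` and `S_K` restrict to the coinvariants
    ∧ (∀ r ∈ coinvariants π, coinvComul π ι r
        ∈ LinearMap.range
            (TensorProduct.map (coinvariants π).subtype (coinvariants π).subtype))
    ∧ (∀ r ∈ coinvariants π, coinvAntipode π ι r ∈ coinvariants π)
    -- the restricted structure maps make `K` a braided Hopf algebra in the category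
    -- of Yetter–Drinfel'd modules over `A`, and `K ⋊ A ≅ H`:
    ∧ ∃ (actK : A ⊗[k] ↥(coinvariants π) →ₗ[k] ↥(coinvariants π))
        (coactK : ↥(coinvariants π) →ₗ[k] A ⊗[k] ↥(coinvariants π))
        (mulK : ↥(coinvariants π) ⊗[k] ↥(coinvariants π) →ₗ[k] ↥(coinvariants π))
        (oneK : ↥(coinvariants π))
        (comulK : ↥(coinvariants π) →ₗ[k] ↥(coinvariants π) ⊗[k] ↥(coinvariants π))
        (counitK : ↥(coinvariants π) →ₗ[k] k)
        (sK : ↥(coinvariants π) →ₗ[k] ↥(coinvariants π)),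
      -- the structure maps agree with the ambient formulas on `H`
      ((coinvariants π).subtype ∘ₗ actK
          = adAct ι ∘ₗ LinearMap.lTensor A (coinvariants π).subtype)
      ∧ (LinearMap.lTensor A (coinvariants π).subtype ∘ₗ coactK
          = adCoact π ∘ₗ (coinvariants π).subtype)
      ∧ ((coinvariants π).subtype ∘ₗ mulK
          = LinearMap.mul' k H
            ∘ₗ TensorProduct.map (coinvariants π).subtype (coinvariants π).subtype)
      ∧ ((oneK : H) = 1)
      ∧ (TensorProduct.map (coinvariants π).subtype (coinvariants π).subtype ∘ₗ comulK
          = coinvComul π ι ∘ₗ (coinvariants π).subtype)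
      ∧ (counitK = Coalgebra.counit (R := k) ∘ₗ (coinvariants π).subtype)
      ∧ ((coinvariants π).subtype ∘ₗ sK = coinvAntipode π ι ∘ₗ (coinvariants π).subtype)
      -- (2') `K` is a Yetter–Drinfel'd module over `A`
      ∧ IsYD actK coactK
      -- (3') `K` is an algebra and a coalgebra ...
      ∧ (mulK ∘ₗ LinearMap.rTensor ↥(coinvariants π) mulK
          = mulK ∘ₗ LinearMap.lTensor ↥(coinvariants π) mulK
            ∘ₗ (TensorProduct.assoc k ↥(coinvariants π) ↥(coinvariants π)
                ↥(coinvariants π)).toLinearMap)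
      ∧ (∀ r : ↥(coinvariants π), mulK (oneK ⊗ₜ[k] r) = r ∧ mulK (r ⊗ₜ[k] oneK) = r)
      ∧ ((TensorProduct.assoc k ↥(coinvariants π) ↥(coinvariants π)
            ↥(coinvariants π)).toLinearMap
          ∘ₗ LinearMap.rTensor ↥(coinvariants π) comulK ∘ₗ comulK
        = LinearMap.lTensor ↥(coinvariants π) comulK ∘ₗ comulK)
      ∧ ((TensorProduct.lid k ↥(coinvariants π)).toLinearMap
          ∘ₗ LinearMap.rTensor ↥(coinvariants π) counitK ∘ₗ comulK = LinearMap.id)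
      ∧ ((TensorProduct.rid k ↥(coinvariants π)).toLinearMap
          ∘ₗ LinearMap.lTensor ↥(coinvariants π) counitK ∘ₗ comulK = LinearMap.id)
      -- ... whose structure maps are `A`-linear and `A`-colinear ...
      ∧ (∀ a : A, actK (a ⊗ₜ[k] oneK) = Coalgebra.counit (R := k) a • oneK)
      ∧ (coactK oneK = (1 : A) ⊗ₜ[k] oneK)
      ∧ (∀ (a : A) (r : ↥(coinvariants π)),
          counitK (actK (a ⊗ₜ[k] r)) = Coalgebra.counit (R := k) a * counitK r)
      ∧ (∀ r : ↥(coinvariants π),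
          (TensorProduct.rid k A) (LinearMap.lTensor A counitK (coactK r))
            = counitK r • (1 : A))
      ∧ (actK ∘ₗ LinearMap.lTensor A mulK = mulK ∘ₗ tAct actK actK)
      ∧ (coactK ∘ₗ mulK = LinearMap.lTensor A mulK ∘ₗ tCoact coactK coactK)
      ∧ (comulK ∘ₗ actK = tAct actK actK ∘ₗ LinearMap.lTensor A comulK)
      ∧ (LinearMap.lTensor A comulK ∘ₗ coactK = tCoact coactK coactK ∘ₗ comulK)
      -- ... satisfying the braided bialgebra axiom ...
      ∧ (comulK ∘ₗ mulK
          = LinearMap.lTensor ↥(coinvariants π) mulK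
            ∘ₗ (TensorProduct.assoc k ↥(coinvariants π) ↥(coinvariants π)
                ↥(coinvariants π)).toLinearMap
            ∘ₗ LinearMap.rTensor ↥(coinvariants π)
                (LinearMap.rTensor ↥(coinvariants π) mulK)
            ∘ₗ LinearMap.rTensor ↥(coinvariants π)
                (TensorProduct.assoc k ↥(coinvariants π) ↥(coinvariants π)
                  ↥(coinvariants π)).symm.toLinearMap
            ∘ₗ LinearMap.rTensor ↥(coinvariants π)
                (LinearMap.lTensor ↥(coinvariants π) (ydBraid coactK actK))
            ∘ₗ LinearMap.rTensor ↥(coinvariants π)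
                (TensorProduct.assoc k ↥(coinvariants π) ↥(coinvariants π)
                  ↥(coinvariants π)).toLinearMap
            ∘ₗ (TensorProduct.assoc k
                (↥(coinvariants π) ⊗[k] ↥(coinvariants π)) ↥(coinvariants π)
                ↥(coinvariants π)).symm.toLinearMap
            ∘ₗ TensorProduct.map comulK comulK)
      ∧ (∀ r s : ↥(coinvariants π), counitK (mulK (r ⊗ₜ[k] s)) = counitK r * counitK s)
      ∧ (counitK oneK = 1)
      ∧ (comulK oneK = oneK ⊗ₜ[k] oneK)
      -- ... and with `S_K` a convolution inverse of the identity
      ∧ (∀ r : ↥(coinvariants π),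
          mulK (LinearMap.rTensor ↥(coinvariants π) sK (comulK r)) = counitK r • oneK)
      ∧ (∀ r : ↥(coinvariants π),
          mulK (LinearMap.lTensor ↥(coinvariants π) sK (comulK r)) = counitK r • oneK)
      -- (4) `r ⊗ a ↦ r ι(a)` is an isomorphism of Hopf algebras `K ⋊ A ≅ H`
      ∧ (Function.Bijective
          (LinearMap.mul' k H
            ∘ₗ TensorProduct.map (coinvariants π).subtype ι.toLinearMap))
      ∧ ((LinearMap.mul' k H
            ∘ₗ TensorProduct.map (coinvariants π).subtype ι.toLinearMap)
          ∘ₗ biMulG mulK actK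
        = LinearMap.mul' k H
          ∘ₗ TensorProduct.map
              (LinearMap.mul' k H
                ∘ₗ TensorProduct.map (coinvariants π).subtype ι.toLinearMap)
              (LinearMap.mul' k H
                ∘ₗ TensorProduct.map (coinvariants π).subtype ι.toLinearMap))
      ∧ ((LinearMap.mul' k H
            ∘ₗ TensorProduct.map (coinvariants π).subtype ι.toLinearMap)
          (oneK ⊗ₜ[k] (1 : A)) = 1)
      ∧ ((Coalgebra.comul (R := k))
          ∘ₗ (LinearMap.mul' k H
            ∘ₗ TensorProduct.map (coinvariants π).subtype ι.toLinearMap)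
        = TensorProduct.map
            (LinearMap.mul' k H
              ∘ₗ TensorProduct.map (coinvariants π).subtype ι.toLinearMap)
            (LinearMap.mul' k H
              ∘ₗ TensorProduct.map (coinvariants π).subtype ι.toLinearMap)
          ∘ₗ biComulG comulK coactK)
      ∧ ((Coalgebra.counit (R := k))
          ∘ₗ (LinearMap.mul' k H
            ∘ₗ TensorProduct.map (coinvariants π).subtype ι.toLinearMap)
        = biCounitG counitK) := by
  refine ⟨⟨one_mem_coinv, fun r s hr hs => mul_mem_coinv hr hs⟩, ?_, ?_, ?_,
    fun r _ => SK_mem hπι r, actK hπι, coactK hπι, mulK hπι, ⟨1, one_mem_coinv⟩, comulK hπι,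
    counitK, sK hπι, act_comp hπι, coact_comp hπι, mul_comp hπι, rfl, comul_comp hπι, rfl,
    sK_comp hπι, isYD_K hπι, mulK_assoc hπι, ?_, comulK_coassoc hπι, comulK_counit_left hπι,
    comulK_counit_right hπι, actK_one hπι, coactK_one hπι, counitK_act hπι, counitK_coact hπι,
    act_mul_K hπι, coact_mul_K hπι, comul_act_K hπι, coact_comul_K hπι, braid_K hπι, ?_, ?_,
    comulK_one hπι, antipode_left_K hπι, antipode_right_K hπι, isoK_bij hπι, isoK_mul hπι, ?_,
    isoK_comul hπι, isoK_counit⟩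
  · intro a r hr
    rw [adAct_eq hπι a ⟨r, hr⟩]
    exact PP_mem hπι _
  · intro r hr
    exact ⟨coactK hπι ⟨r, hr⟩, LinearMap.congr_fun (coact_comp hπι) ⟨r, hr⟩⟩
  · intro r hr
    exact ⟨comulK hπι ⟨r, hr⟩, LinearMap.congr_fun (comul_comp hπι) ⟨r, hr⟩⟩
  · intro r
    simp [mulK_tmul, Pk_coe]
  · intro r s
    rw [mulK_tmul, counitK_Pk, Bialgebra.counit_mul]
    rfl
  · simp [counitK]
  · change (1 : H) * ι 1 = 1
    simp

end Radford

end
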